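/- (Corollary 4.4.) Let q be a complex number with 0 < |q| < 1, and let k ≥ 1 and 1 ≤ j ≤ k be integers. Then ∑_{s_1 ≥ s_2 ≥ ⋯ ≥ s_{k+1} ≥ 0} q^{E} / (q;q)_{s_1-s_2} · ∏_{i=3}^{k+2} (-q^{2^{i-3}}; q^{2^{i-3}})_{2 s_i} / (q^{2^{i-2}}; q^{2^{i-2}})_{s_{i-1} - s_i} = (q^{2^k+4}, q^{2^{j-1}+2}, q^{2^k - 2^{j-1} + 2}; q^{2^k+4})_∞ / (q;q)_∞, where E = s_1^2 + s_2^2 + s_2 + ∑_{m=3}^{k+1} 2^{m-3} s_m - 2^{j-1} s_{j+1} and s_{k+2} = 0. Moreover, if the term -2^{j-1} s_{j+1} in E is replaced by 0, the right side becomes (q^{2^k+4}, q^{2}, q^{2^k+2}; q^{2^k+4})_∞ / (q;q)_∞, and if it is replaced by +s_1, the right side becomes (q^{2^k+4}, q, q^{2^k+3}; q^{2^k+4})_∞ / (q;q)_∞. -/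

import Mathlib

/-- The finite q-Pochhammer symbol `(x;q)_n = ∏_{j=0}^{n-1} (1 - x q^j)`. -/
noncomputable def qPoch (x q : ℂ) (n : ℕ) : ℂ := ∏ j ∈ Finset.range n, (1 - x * q ^ j)

/-- The infinite q-Pochhammer symbol `(x;q)_∞ = ∏_{j=0}^{∞} (1 - x q^j)`. -/
noncomputable def qPochInf (x q : ℂ) : ℂ := ∏' j : ℕ, (1 - x * q ^ j)

open Filter Topology

lemma qPoch_zero (x q : ℂ) : qPoch x q 0 = 1 := by simp [qPoch]

lemma qPoch_succ (x q : ℂ) (n : ℕ) : qPoch x q (n + 1) = qPoch x q n * (1 - x * q ^ n) := by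
  simp [qPoch, Finset.prod_range_succ]

lemma qPoch_succ' (x q : ℂ) (n : ℕ) : qPoch x q (n + 1) = (1 - x) * qPoch (x * q) q n := by
  simp only [qPoch, Finset.prod_range_succ', pow_zero, mul_one]
  rw [mul_comm]
  congr 1
  refine Finset.prod_congr rfl fun i _ => ?_
  ring

lemma qPoch_add (x q : ℂ) (n m : ℕ) :
    qPoch x q (n + m) = qPoch x q n * qPoch (x * q ^ n) q m := by
  simp only [qPoch, Finset.prod_range_add]
  congr 1
  refine Finset.prod_congr rfl fun i _ => ?_
  ring

lemma one_sub_ne {x : ℂ} (h : ‖x‖ < 1) : 1 - x ≠ 0 := by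
  intro h'
  have : x = 1 := (sub_eq_zero.mp h').symm
  rw [this] at h; simp at h

lemma norm_mul_pow_lt {x q : ℂ} (hx : ‖x‖ < 1) (hq : ‖q‖ < 1) (n : ℕ) : ‖x * q ^ n‖ < 1 := by
  rw [norm_mul, norm_pow]
  calc ‖x‖ * ‖q‖ ^ n ≤ ‖x‖ * 1 := by
        gcongr; exact pow_le_one₀ (norm_nonneg _) hq.le
    _ < 1 := by simpa using hx

lemma qPoch_ne {x q : ℂ} (hx : ‖x‖ < 1) (hq : ‖q‖ < 1) (n : ℕ) : qPoch x q n ≠ 0 := by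
  refine Finset.prod_ne_zero_iff.mpr fun j _ => one_sub_ne (norm_mul_pow_lt hx hq j)

lemma summable_norm_mul_pow (x : ℂ) {q : ℂ} (hq : ‖q‖ < 1) :
    Summable (fun j : ℕ => ‖-(x * q ^ j)‖) := by
  simp only [norm_neg, norm_mul, norm_pow]
  exact (summable_geometric_of_lt_one (norm_nonneg _) hq).mul_left _

lemma qPoch_multipliable (x : ℂ) {q : ℂ} (hq : ‖q‖ < 1) :
    Multipliable (fun j : ℕ => 1 - x * q ^ j) := by
  have := multipliable_one_add_of_summable (f := fun j : ℕ => -(x * q ^ j))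
    (summable_norm_mul_pow x hq)
  simpa [sub_eq_add_neg] using this

lemma qPoch_tendsto (x : ℂ) {q : ℂ} (hq : ‖q‖ < 1) :
    Tendsto (fun n => qPoch x q n) atTop (𝓝 (qPochInf x q)) :=
  (qPoch_multipliable x hq).hasProd.tendsto_prod_nat

lemma qPochInf_ne {x q : ℂ} (hx : ‖x‖ < 1) (hq : ‖q‖ < 1) : qPochInf x q ≠ 0 := by
  have := tprod_one_add_ne_zero_of_summable (f := fun j : ℕ => -(x * q ^ j))
    (fun j => by
      rw [← sub_eq_add_neg]
      exact one_sub_ne (norm_mul_pow_lt hx hq j)) (summable_norm_mul_pow x hq)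
  simpa [qPochInf, sub_eq_add_neg] using this

lemma qPoch_bdd (x : ℂ) {q : ℂ} (hq : ‖q‖ < 1) : ∃ M : ℝ, 1 ≤ M ∧ ∀ n, ‖qPoch x q n‖ ≤ M := by
  obtain ⟨M, hM⟩ := (qPoch_tendsto x hq).norm.bddAbove_range
  exact ⟨max M 1, le_max_right _ _, fun n => le_max_of_le_left (hM ⟨n, rfl⟩)⟩

lemma qPoch_inv_bdd {x q : ℂ} (hx : ‖x‖ < 1) (hq : ‖q‖ < 1) :
    ∃ M : ℝ, 1 ≤ M ∧ ∀ n, ‖(qPoch x q n)⁻¹‖ ≤ M := by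
  obtain ⟨M, hM⟩ := ((qPoch_tendsto x hq).inv₀ (qPochInf_ne hx hq)).norm.bddAbove_range
  exact ⟨max M 1, le_max_right _ _, fun n => le_max_of_le_left (hM ⟨n, rfl⟩)⟩

/-- Reciprocal `1/(q;q)_m`, extended by zero to negative `m`. -/
noncomputable def iq (q : ℂ) (m : ℤ) : ℂ := if 0 ≤ m then (qPoch q q m.toNat)⁻¹ else 0

lemma iq_nat (q : ℂ) (n : ℕ) : iq q n = (qPoch q q n)⁻¹ := by simp [iq]

lemma iq_neg (q : ℂ) {m : ℤ} (h : m < 0) : iq q m = 0 := by simp [iq, h]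

lemma iq_rec {q : ℂ} (hq : ‖q‖ < 1) (m : ℤ) : iq q (m - 1) = (1 - q ^ m) * iq q m := by
  rcases lt_trichotomy m 0 with h | h | h
  · rw [iq_neg q h, iq_neg q (by omega)]; simp
  · subst h; rw [iq_neg q (by omega)]; simp
  · obtain ⟨n, rfl⟩ : ∃ n : ℕ, m = (n : ℤ) + 1 := ⟨(m - 1).toNat, by omega⟩
    have e : ((n : ℤ) + 1) = ((n + 1 : ℕ) : ℤ) := by push_cast; ring
    rw [add_sub_cancel_right, iq_nat, e, iq_nat, qPoch_succ, zpow_natCast, pow_succ']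
    have := qPoch_ne hq hq n
    have := one_sub_ne (norm_mul_pow_lt hq hq n)
    field_simp

lemma iq_bdd {q : ℂ} (hq : ‖q‖ < 1) : ∃ M : ℝ, 1 ≤ M ∧ ∀ m, ‖iq q m‖ ≤ M := by
  obtain ⟨M, h1, hM⟩ := qPoch_inv_bdd hq hq
  refine ⟨M, h1, fun m => ?_⟩
  unfold iq
  split_ifs
  · exact hM _
  · simp; linarith

lemma iq_tendsto {q : ℂ} (hq : ‖q‖ < 1) :
    Tendsto (fun m : ℤ => iq q m) atTop (𝓝 (qPochInf q q)⁻¹) := by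
  have h : Tendsto (fun m : ℤ => (qPoch q q m.toNat)⁻¹) atTop (𝓝 (qPochInf q q)⁻¹) :=
    ((qPoch_tendsto q hq).inv₀ (qPochInf_ne hq hq)).comp
      (tendsto_atTop_atTop.mpr fun b => ⟨b, fun a ha => by omega⟩)
  refine h.congr' ?_
  filter_upwards [eventually_ge_atTop 0] with m hm
  simp [iq, hm]


lemma uniq_rec {q : ℂ} (hq : ‖q‖ < 1) (T : ℕ → ℂ → ℂ)
    (hT0 : ∀ c, T 0 c = 1)
    (hrec : ∀ N c, ‖c‖ ≤ 1 → T (N + 1) c = T (N + 1) (c * q) +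
      c * q / ((1 - c * q) * (1 - c * q ^ 2)) * T N (c * q ^ 2))
    (hcont : ∀ N, ContinuousAt (T N) 0)
    (h0 : ∀ N, T N 0 = (qPoch q q N)⁻¹) (N : ℕ) :
    ∀ c, ‖c‖ ≤ 1 → T N c = (qPoch q q N)⁻¹ * (qPoch (c * q) q N)⁻¹ := by
  have hlt : ∀ c : ℂ, ‖c‖ ≤ 1 → ‖c * q‖ < 1 := fun c hc => by
    rw [norm_mul]
    calc ‖c‖ * ‖q‖ ≤ 1 * ‖q‖ := by gcongr
      _ < 1 := by simpa using hq
  have hcontU : ∀ N, ContinuousAt (fun c : ℂ => (qPoch q q N)⁻¹ * (qPoch (c * q) q N)⁻¹) 0 := by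
    intro N
    refine ContinuousAt.mul continuousAt_const (ContinuousAt.inv₀ ?_ ?_)
    · unfold qPoch
      fun_prop
    · exact qPoch_ne (by simp) hq N
  induction N with
  | zero => intro c _; simp [hT0, qPoch_zero]
  | succ N ih =>
    have hU : ∀ c : ℂ, ‖c‖ ≤ 1 → (qPoch q q (N + 1))⁻¹ * (qPoch (c * q) q (N + 1))⁻¹ =
        (qPoch q q (N + 1))⁻¹ * (qPoch (c * q * q) q (N + 1))⁻¹ +
        c * q / ((1 - c * q) * (1 - c * q ^ 2)) *
          ((qPoch q q N)⁻¹ * (qPoch (c * q ^ 2 * q) q N)⁻¹) := by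
      intro c hc
      have a1 := hlt c hc
      have a2 : ‖c * q * q‖ < 1 := hlt _ a1.le
      have a3 : ‖c * q ^ 2 * q‖ < 1 := by
        have := hlt _ a2.le
        rwa [show c * q ^ 2 * q = c * q * q * q by ring]
      have e1 := qPoch_succ' (c * q * q) q N
      rw [qPoch_succ, show c * q * q * q = c * q ^ 2 * q by ring] at e1
      rw [qPoch_succ' (c * q), qPoch_succ, qPoch_succ]
      have n1 := qPoch_ne hq hq N
      have n2 := qPoch_ne a2 hq N
      have n3 := qPoch_ne a3 hq N
      have n4 := one_sub_ne a1
      have n5 := one_sub_ne (norm_mul_pow_lt hq hq N)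
      have n6 := one_sub_ne (norm_mul_pow_lt a2 hq N)
      have n7 := one_sub_ne a2
      have e2 : qPoch (c * q ^ 2 * q) q N =
          qPoch (c * q * q) q N * (1 - c * q * q * q ^ N) / (1 - c * q * q) := by
        rw [eq_div_iff n7, e1]; ring
      rw [e2, show c * q ^ 2 = c * q * q by ring]
      clear e2 e1 n3 a1 a2 a3
      generalize qPoch (c * q * q) q N = A at *
      generalize qPoch q q N = B at *
      generalize q ^ N = y at *
      generalize c * q = x at *
      generalize hd7 : 1 - x * q = d7 at *
      generalize hd6 : 1 - x * q * y = d6 at *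
      generalize hd5 : 1 - q * y = d5 at *
      generalize hd4 : 1 - x = d4 at *
      field_simp
      subst hd7 hd6 hd5 hd4
      ring
    have step : ∀ c : ℂ, ‖c‖ ≤ 1 →
        T (N + 1) c - (qPoch q q (N + 1))⁻¹ * (qPoch (c * q) q (N + 1))⁻¹ =
        T (N + 1) (c * q) - (qPoch q q (N + 1))⁻¹ * (qPoch (c * q * q) q (N + 1))⁻¹ := by
      intro c hc
      rw [hrec N c hc, hU c hc, ih (c * q ^ 2)]
      · ring
      · have := (hlt _ (hlt c hc).le).le
        rwa [show c * q ^ 2 = c * q * q by ring]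
    intro c hc
    set d : ℂ → ℂ := fun c =>
      T (N + 1) c - (qPoch q q (N + 1))⁻¹ * (qPoch (c * q) q (N + 1))⁻¹ with hd
    have hdm : ∀ m : ℕ, d (c * q ^ m) = d c := by
      intro m
      induction m with
      | zero => simp
      | succ m ihm =>
        rw [← ihm, pow_succ, ← mul_assoc]
        refine (step _ ?_).symm
        rw [norm_mul, norm_pow]
        exact mul_le_one₀ hc (by positivity) (pow_le_one₀ (norm_nonneg _) hq.le)
    have hlim : Tendsto (fun m : ℕ => c * q ^ m) atTop (𝓝 0) := by
      simpa using (tendsto_pow_atTop_nhds_zero_of_norm_lt_one hq).const_mul c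
    have hdc : ContinuousAt d 0 := (hcont (N + 1)).sub (hcontU (N + 1))
    have hl2 := hdc.tendsto.comp hlim
    have hl3 : Tendsto (d ∘ fun m : ℕ => c * q ^ m) atTop (𝓝 (d c)) :=
      tendsto_const_nhds.congr fun m => (hdm m).symm
    have : d c = d 0 := tendsto_nhds_unique hl3 hl2
    have z : d 0 = 0 := by
      simp only [hd, h0]
      simp [qPoch]
    rw [z] at this
    exact sub_eq_zero.mp this

lemma sq_lt {q : ℂ} (hq : ‖q‖ < 1) : ‖q ^ 2‖ < 1 := by
  rw [norm_pow]; exact pow_lt_one₀ (norm_nonneg _) hq (by norm_num)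

lemma rogers_szego {q : ℂ} (hq : ‖q‖ < 1) (N : ℕ) :
    ∑ i ∈ Finset.range (N + 1), q ^ (N - i) * (qPoch (q ^ 2) (q ^ 2) (N - i))⁻¹ *
      (qPoch (q ^ 2) (q ^ 2) i)⁻¹ = (qPoch q q N)⁻¹ := by
  have hq2 := sq_lt hq
  set u : ℕ → ℂ := fun i => (qPoch (q ^ 2) (q ^ 2) i)⁻¹ with hu
  set E : ℕ → ℂ := fun N => ∑ i ∈ Finset.range (N + 1), q ^ (N - i) * u (N - i) * u i with hE
  have hur : ∀ i, (1 - q ^ (2 * (i + 1))) * u (i + 1) = u i := by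
    intro i
    simp only [hu, qPoch_succ]
    have := qPoch_ne hq2 hq2 i
    have h := one_sub_ne (norm_mul_pow_lt hq2 hq2 i)
    rw [show q ^ (2 * (i + 1)) = q ^ 2 * (q ^ 2) ^ i by ring]
    field_simp
  have A : ∀ n, ∑ i ∈ Finset.range (n + 2), q ^ (n + 1 - i) * u (n + 1 - i) *
      ((1 - q ^ (2 * i)) * u i) = E n := by
    intro n
    rw [Finset.sum_range_succ']
    simp only [hur, hE]
    simp
  have B : ∀ n, ∑ i ∈ Finset.range (n + 2), q ^ (2 * i) * (q ^ (n + 1 - i) *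
      ((1 - q ^ (2 * (n + 1 - i))) * u (n + 1 - i)) * u i) =
      q * ∑ i ∈ Finset.range (n + 1), q ^ (2 * i) * (q ^ (n - i) * u (n - i) * u i) := by
    intro n
    rw [Finset.sum_range_succ, Finset.mul_sum]
    simp only [Nat.sub_self, mul_zero, pow_zero, sub_self, zero_mul, add_zero]
    refine Finset.sum_congr rfl fun i hi => ?_
    have hi := Finset.mem_range.mp hi
    rw [show n + 1 - i = (n - i) + 1 by omega, hur]
    ring
  have C : ∀ n, (1 - q ^ (2 * (n + 2))) * E (n + 2) = (1 + q) * E (n + 1) - q * E n := by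
    intro n
    have s1 : (1 - q ^ (2 * (n + 2))) * E (n + 2) = E (n + 1) +
        q * ∑ i ∈ Finset.range (n + 2), q ^ (2 * i) * (q ^ (n + 1 - i) * u (n + 1 - i) * u i) := by
      rw [← B (n + 1), ← A (n + 1), hE, Finset.mul_sum, ← Finset.sum_add_distrib]
      refine Finset.sum_congr rfl fun i hi => ?_
      have hi := Finset.mem_range.mp hi
      have : q ^ (2 * (n + 2)) = q ^ (2 * i) * q ^ (2 * (n + 1 + 1 - i)) := by
        rw [← pow_add]; congr 1; omega
      rw [this]; ring
    have s2 : ∑ i ∈ Finset.range (n + 2), q ^ (2 * i) * (q ^ (n + 1 - i) * u (n + 1 - i) * u i)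
        = E (n + 1) - E n := by
      rw [← A n, hE, ← Finset.sum_sub_distrib]
      refine Finset.sum_congr rfl fun i hi => ?_
      ring
    rw [s1, s2]; ring
  have u0 : u 0 = 1 := by simp [hu, qPoch_zero]
  suffices h : E N = (qPoch q q N)⁻¹ ∧ E (N + 1) = (qPoch q q (N + 1))⁻¹ from h.1
  induction N with
  | zero =>
    have h1 := one_sub_ne hq
    have h2 := one_sub_ne hq2
    refine ⟨by simp [hE, u0, qPoch_zero], ?_⟩
    have u1 : u 1 = (1 - q ^ 2)⁻¹ := by simp [hu, qPoch]
    simp only [hE, Finset.sum_range_succ, Finset.sum_range_zero]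
    simp only [zero_add, Nat.sub_zero, Nat.sub_self, u0, u1, pow_zero, pow_one]
    simp only [qPoch, Finset.prod_range_one, pow_zero, mul_one]
    field_simp
    ring
  | succ n ih =>
    refine ⟨ih.2, ?_⟩
    have c := C n
    have hn : ‖q ^ (2 * (n + 2))‖ < 1 := by
      rw [norm_pow]; exact pow_lt_one₀ (norm_nonneg _) hq (by omega)
    have h1 := one_sub_ne hn
    rw [ih.1, ih.2] at c
    apply mul_left_cancel₀ h1
    rw [c, qPoch_succ q q (n + 1), qPoch_succ q q n]
    have := qPoch_ne hq hq n
    have h4 := one_sub_ne (norm_mul_pow_lt hq hq n)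
    have h5 := one_sub_ne (norm_mul_pow_lt hq hq (n + 1))
    field_simp
    ring


/-- Auxiliary sum for the change of base kernel. -/
noncomputable def TD (q : ℂ) (N : ℕ) (c : ℂ) : ℂ :=
  ∑ i ∈ Finset.range (N + 1), q ^ (N - i) * (qPoch (q ^ 2) (q ^ 2) (N - i))⁻¹ *
      (qPoch (q ^ 2) (q ^ 2) i)⁻¹ *
      (qPoch (-(c * q)) q (2 * i) * (qPoch (c ^ 2 * q ^ 2) (q ^ 2) i)⁻¹)

/-- Auxiliary sum for the ordinary Bailey kernel. -/
noncomputable def TB (q : ℂ) (N : ℕ) (c : ℂ) : ℂ :=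
  ∑ i ∈ Finset.range (N + 1), (qPoch q q (N - i))⁻¹ * (qPoch q q i)⁻¹ *
      (q ^ (i ^ 2) * c ^ i * (qPoch (c * q) q i)⁻¹)

lemma cpow_lt {c q : ℂ} (hc : ‖c‖ ≤ 1) (hq : ‖q‖ < 1) {n : ℕ} (hn : n ≠ 0) : ‖c * q ^ n‖ < 1 := by
  rw [norm_mul, norm_pow]
  calc ‖c‖ * ‖q‖ ^ n ≤ 1 * ‖q‖ ^ n := by gcongr
    _ < 1 := by simpa using pow_lt_one₀ (norm_nonneg _) hq hn

lemma TD_eq {q : ℂ} (hq : ‖q‖ < 1) (N : ℕ) (c : ℂ) (hc : ‖c‖ ≤ 1) :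
    TD q N c = (qPoch q q N)⁻¹ * (qPoch (c * q) q N)⁻¹ := by
  have hq2 := sq_lt hq
  refine uniq_rec hq (TD q) ?_ ?_ ?_ ?_ N c hc
  · intro c; simp [TD, qPoch_zero]
  · intro N c hc
    unfold TD
    rw [Finset.sum_range_succ' _ (N + 1), Finset.sum_range_succ' _ (N + 1), Finset.mul_sum]
    have : ∀ a b z x : ℂ, a = b + x → a + z = b + z + x := by intro a b z x h; rw [h]; ring
    simp only [mul_zero, qPoch_zero]
    apply this
    rw [← Finset.sum_add_distrib]
    refine Finset.sum_congr rfl fun i hi => ?_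
    have hi := Finset.mem_range.mp hi
    rw [show N + 1 - (i + 1) = N - i by omega, show 2 * (i + 1) = 2 * i + 1 + 1 by ring]
    have hc2 : ‖c ^ 2‖ ≤ 1 := by rw [norm_pow]; exact pow_le_one₀ (norm_nonneg _) hc
    have a1 : ‖c * q‖ < 1 := by simpa using cpow_lt hc hq one_ne_zero
    have a2 : ‖c * q ^ 2‖ < 1 := cpow_lt hc hq two_ne_zero
    have b1 : ‖c ^ 2 * q ^ 2‖ < 1 := cpow_lt hc2 hq two_ne_zero
    have b2 : ‖c ^ 2 * q ^ 4‖ < 1 := cpow_lt hc2 hq (by norm_num)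
    have b3 : ‖c ^ 2 * q ^ 6‖ < 1 := cpow_lt hc2 hq (by norm_num)
    have e1 : qPoch (-(c * q)) q (2 * i + 1 + 1) =
        (1 + c * q) * ((1 + c * q ^ 2) * qPoch (-(c * q ^ 3)) q (2 * i)) := by
      rw [qPoch_succ', qPoch_succ']
      rw [show -(c * q) * q * q = -(c * q ^ 3) by ring]; ring
    have e2 : qPoch (-(c * q * q)) q (2 * i + 1 + 1) =
        (1 + c * q ^ 2) * (qPoch (-(c * q ^ 3)) q (2 * i) * (1 + c * q ^ 3 * (q ^ i) ^ 2)) := by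
      rw [qPoch_succ', qPoch_succ]
      rw [show -(c * q * q) * q = -(c * q ^ 3) by ring]; ring
    have e3 : qPoch (c ^ 2 * q ^ 2) (q ^ 2) (i + 1) =
        (1 - c ^ 2 * q ^ 2) * qPoch (c ^ 2 * q ^ 4) (q ^ 2) i := by
      rw [qPoch_succ', show c ^ 2 * q ^ 2 * q ^ 2 = c ^ 2 * q ^ 4 by ring]
    have e4 : qPoch ((c * q) ^ 2 * q ^ 2) (q ^ 2) (i + 1) =
        qPoch (c ^ 2 * q ^ 4) (q ^ 2) i * (1 - c ^ 2 * q ^ 4 * (q ^ i) ^ 2) := by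
      rw [qPoch_succ, show (c * q) ^ 2 * q ^ 2 = c ^ 2 * q ^ 4 by ring]; ring
    have e5 : qPoch (c ^ 2 * q ^ 4) (q ^ 2) i * (1 - c ^ 2 * q ^ 4 * (q ^ i) ^ 2) =
        (1 - c ^ 2 * q ^ 4) * qPoch (c ^ 2 * q ^ 6) (q ^ 2) i := by
      have := qPoch_succ' (c ^ 2 * q ^ 4) (q ^ 2) i
      rw [qPoch_succ, show c ^ 2 * q ^ 4 * q ^ 2 = c ^ 2 * q ^ 6 by ring] at this
      rw [← this]; ring
    have n1 := qPoch_ne b2 hq2 i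
    have n2 := qPoch_ne b3 hq2 i
    have n3 : 1 - c ^ 2 * q ^ 4 * (q ^ i) ^ 2 ≠ 0 := by
      have := one_sub_ne (norm_mul_pow_lt b2 hq2 i)
      rwa [show (q ^ i) ^ 2 = (q ^ 2) ^ i by ring]
    have n4 := one_sub_ne b1
    have n5 := one_sub_ne b2
    have n6 := one_sub_ne a1
    have n7 := one_sub_ne a2
    have n8 := qPoch_ne hq2 hq2 i
    have n9 : 1 - q ^ 2 * (q ^ i) ^ 2 ≠ 0 := by
      have := one_sub_ne (norm_mul_pow_lt hq2 hq2 i)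
      rwa [show (q ^ i) ^ 2 = (q ^ 2) ^ i by ring]
    have e6 : qPoch (c ^ 2 * q ^ 6) (q ^ 2) i =
        qPoch (c ^ 2 * q ^ 4) (q ^ 2) i * (1 - c ^ 2 * q ^ 4 * (q ^ i) ^ 2) / (1 - c ^ 2 * q ^ 4) := by
      rw [e5]; field_simp
    have e7 : qPoch (q ^ 2) (q ^ 2) (i + 1) =
        qPoch (q ^ 2) (q ^ 2) i * (1 - q ^ 2 * (q ^ i) ^ 2) := by
      rw [qPoch_succ]; ring
    rw [e1, e2, e3, e4, e7, show c * q ^ 2 * q = c * q ^ 3 by ring,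
      show (c * q ^ 2) ^ 2 * q ^ 2 = c ^ 2 * q ^ 6 by ring, e6]
    clear e1 e2 e3 e4 e5 e6 e7 n2 a1 a2 b1 b2 b3 hc2
    generalize qPoch (c ^ 2 * q ^ 4) (q ^ 2) i = A at *
    generalize qPoch (-(c * q ^ 3)) q (2 * i) = B at *
    generalize qPoch (q ^ 2) (q ^ 2) i = D at *
    generalize (qPoch (q ^ 2) (q ^ 2) (N - i))⁻¹ = F at *
    generalize q ^ (N - i) = G at *
    generalize q ^ i = y at *
    have h4 : 1 - c ^ 2 * q ^ 2 = (1 - c * q) * (1 + c * q) := by ring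
    have h5 : 1 - c ^ 2 * q ^ 4 = (1 - c * q ^ 2) * (1 + c * q ^ 2) := by ring
    rw [h4] at n4 ⊢
    rw [h5] at n5 ⊢
    have m4 := right_ne_zero_of_mul n4
    have m5 := right_ne_zero_of_mul n5
    clear n4 n5 h4 h5 this
    generalize g3 : 1 - c ^ 2 * q ^ 4 * y ^ 2 = d3 at *
    generalize g9 : 1 - q ^ 2 * y ^ 2 = d9 at *
    generalize g6 : 1 - c * q = d6 at *
    generalize g7 : 1 - c * q ^ 2 = d7 at *
    generalize g4 : 1 + c * q = d4 at *
    generalize g5 : 1 + c * q ^ 2 = d5 at *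
    field_simp
    subst g3 g9 g6 g7 g4 g5
    ring
  · intro N
    unfold TD
    refine tendsto_finsetSum _ fun i _ => ?_
    refine ContinuousAt.mul continuousAt_const (ContinuousAt.mul ?_ (ContinuousAt.inv₀ ?_ ?_))
    · unfold qPoch; fun_prop
    · unfold qPoch; fun_prop
    · exact qPoch_ne (by simp) hq2 i
  · intro N
    rw [← rogers_szego hq]
    unfold TD
    refine Finset.sum_congr rfl fun i _ => ?_
    simp [qPoch]

lemma TB_eq {q : ℂ} (hq : ‖q‖ < 1) (N : ℕ) (c : ℂ) (hc : ‖c‖ ≤ 1) :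
    TB q N c = (qPoch q q N)⁻¹ * (qPoch (c * q) q N)⁻¹ := by
  refine uniq_rec hq (TB q) ?_ ?_ ?_ ?_ N c hc
  · intro c; simp [TB, qPoch_zero]
  · intro N c hc
    unfold TB
    rw [Finset.sum_range_succ' _ (N + 1), Finset.sum_range_succ' _ (N + 1), Finset.mul_sum]
    have : ∀ a b z x : ℂ, a = b + x → a + z = b + z + x := by intro a b z x h; rw [h]; ring
    simp only [qPoch_zero, pow_zero]
    apply this
    rw [← Finset.sum_add_distrib]
    refine Finset.sum_congr rfl fun i hi => ?_
    have hi := Finset.mem_range.mp hi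
    rw [show N + 1 - (i + 1) = N - i by omega]
    have a1 : ‖c * q‖ < 1 := by simpa using cpow_lt hc hq one_ne_zero
    have a2 : ‖c * q ^ 2‖ < 1 := cpow_lt hc hq two_ne_zero
    have a3 : ‖c * q ^ 3‖ < 1 := cpow_lt hc hq three_ne_zero
    have e1 : qPoch (c * q) q (i + 1) = (1 - c * q) * qPoch (c * q ^ 2) q i := by
      rw [qPoch_succ', show c * q * q = c * q ^ 2 by ring]
    have e2 : qPoch (c * q * q) q (i + 1) =
        qPoch (c * q ^ 2) q i * (1 - c * q ^ 2 * q ^ i) := by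
      rw [qPoch_succ, show c * q * q = c * q ^ 2 by ring]
    have e3 := qPoch_succ' (c * q ^ 2) q i
    rw [qPoch_succ] at e3
    have n1 := one_sub_ne a1
    have n2 := one_sub_ne a2
    have n3 := one_sub_ne (norm_mul_pow_lt a2 hq i)
    have n4 := one_sub_ne (norm_mul_pow_lt hq hq i)
    have n5 := qPoch_ne hq hq i
    have n6 := qPoch_ne a2 hq i
    have e4 : qPoch (c * q ^ 2 * q) q i =
        qPoch (c * q ^ 2) q i * (1 - c * q ^ 2 * q ^ i) / (1 - c * q ^ 2) := by
      rw [e3]; field_simp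
    rw [e1, e2, e4, qPoch_succ q q i]
    have e5 : q ^ (i + 1) ^ 2 = q ^ (i ^ 2) * (q ^ i) ^ 2 * q := by ring
    have e6 : c ^ (i + 1) = c ^ i * c := by ring
    have e7 : (c * q) ^ (i + 1) = c ^ i * c * q ^ i * q := by ring
    have e8 : (c * q ^ 2) ^ i = c ^ i * (q ^ i) ^ 2 := by ring
    rw [e5, e6, e7, e8]
    clear e1 e2 e3 e4 e5 e6 e7 e8 a1 a2 a3 this
    generalize qPoch (c * q ^ 2) q i = A at *
    generalize qPoch q q i = B at *
    generalize (qPoch q q (N - i))⁻¹ = F at *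
    generalize q ^ i ^ 2 = G at *
    generalize q ^ i = y at *
    generalize c ^ i = H at *
    generalize g1 : 1 - c * q = d1 at *
    generalize g3 : 1 - c * q ^ 2 * y = d3 at *
    generalize g2 : 1 - c * q ^ 2 = d2 at *
    generalize g4 : 1 - q * y = d4 at *
    field_simp
    subst g1 g2 g3 g4
    ring
  · intro N
    unfold TB
    refine tendsto_finsetSum _ fun i _ => ?_
    refine ContinuousAt.mul continuousAt_const (ContinuousAt.mul ?_ (ContinuousAt.inv₀ ?_ ?_))
    · fun_prop
    · unfold qPoch; fun_prop
    · exact qPoch_ne (by simp) hq i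
  · intro N
    unfold TB
    rw [Finset.sum_eq_single 0]
    · simp [qPoch_zero]
    · intro b _ hb
      simp [hb]
    · simp


/-- One change-of-base step. -/
noncomputable def bstep (q : ℂ) (n m : ℕ) : ℂ :=
  q ^ (n - m) * (qPoch (-q) q (2 * m) / qPoch (q ^ 2) (q ^ 2) (n - m))

lemma kernel_ext (w : ℕ → ℕ → ℂ) (q p : ℂ) (g : ℤ → ℂ) (hg : ∀ r, g (-r) = g r)
    (h : ∀ r N : ℕ, ∑ i ∈ Finset.range (N + 1), w (r + N) (r + i) *
      (iq p (i : ℕ) * iq p (i + 2 * r : ℕ)) = g r * (iq q (N : ℕ) * iq q (N + 2 * r : ℕ)))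
    (n : ℕ) (r : ℤ) :
    ∑ m ∈ Finset.range (n + 1), w n m * (iq p (m - r) * iq p (m + r)) =
      g r * (iq q (n - r) * iq q (n + r)) := by
  have key : ∀ r : ℕ, ∑ m ∈ Finset.range (n + 1), w n m * (iq p (m - r) * iq p (m + r)) =
      g r * (iq q (n - r) * iq q (n + r)) := by
    intro r
    by_cases hr : r ≤ n
    · obtain ⟨N, rfl⟩ := Nat.exists_eq_add_of_le hr
      rw [add_assoc, Finset.sum_range_add, Finset.sum_eq_zero, zero_add]
      · have := h r N
        rw [show ((r + N : ℕ) : ℤ) - r = (N : ℕ) by push_cast; ring,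
          show ((r + N : ℕ) : ℤ) + r = (N + 2 * r : ℕ) by push_cast; ring, ← this]
        refine Finset.sum_congr rfl fun i _ => ?_
        rw [show ((r + i : ℕ) : ℤ) - r = (i : ℕ) by push_cast; ring,
          show ((r + i : ℕ) : ℤ) + r = (i + 2 * r : ℕ) by push_cast; ring]
      · intro m hm
        have := Finset.mem_range.mp hm
        rw [iq_neg p (by omega)]; simp
    · rw [iq_neg q (by omega), Finset.sum_eq_zero]
      · simp
      · intro m hm
        have := Finset.mem_range.mp hm
        rw [iq_neg p (by omega)]; simp
  rcases le_total 0 r with hr | hr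
  · obtain ⟨s, rfl⟩ := Int.eq_ofNat_of_zero_le hr
    exact key s
  · obtain ⟨s, hs⟩ := Int.eq_ofNat_of_zero_le (neg_nonneg.mpr hr)
    obtain rfl : r = -(s : ℤ) := by omega
    have := key s
    rw [hg]
    simp only [sub_neg_eq_add, ← sub_eq_add_neg]
    simp only [mul_comm (iq p (_ + _)), mul_comm (iq q (_ + _))]
    exact this

lemma qPoch_sq (q : ℂ) (n : ℕ) : qPoch (q ^ 2) (q ^ 2) n = qPoch q q n * qPoch (-q) q n := by
  simp only [qPoch, ← Finset.prod_mul_distrib]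
  refine Finset.prod_congr rfl fun i _ => ?_
  ring

lemma norm_qpow_le {q : ℂ} (hq : ‖q‖ < 1) (n : ℕ) : ‖q ^ n‖ ≤ 1 := by
  rw [norm_pow]; exact pow_le_one₀ (norm_nonneg _) hq.le

lemma kerD {q : ℂ} (hq : ‖q‖ < 1) (n : ℕ) (r : ℤ) :
    ∑ m ∈ Finset.range (n + 1), bstep q n m * (iq (q ^ 2) (m - r) * iq (q ^ 2) (m + r)) =
      iq q (n - r) * iq q (n + r) := by
  have hq2 := sq_lt hq
  have := kernel_ext (bstep q) q (q ^ 2) (fun _ => 1) (fun _ => rfl) ?_ n r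
  · simpa using this
  intro r N
  simp only [iq_nat, one_mul]
  have h := TD_eq hq N (q ^ (2 * r)) (norm_qpow_le hq _)
  have hs : qPoch q q (N + 2 * r) = qPoch q q (2 * r) * qPoch (q ^ (2 * r) * q) q N := by
    rw [add_comm, qPoch_add, mul_comm q]
  have hn : qPoch (-q) q (2 * r) ≠ 0 := qPoch_ne (by simpa using hq) hq _
  have hn' := qPoch_ne hq hq (2 * r)
  rw [hs, mul_inv, mul_left_comm, ← h, TD, Finset.mul_sum]
  refine Finset.sum_congr rfl fun i _ => ?_
  have e1 : qPoch (-q) q (2 * (r + i)) =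
      qPoch (-q) q (2 * r) * qPoch (-(q ^ (2 * r) * q)) q (2 * i) := by
    rw [mul_add, qPoch_add]; congr 2; ring
  have e2 : qPoch (q ^ 2) (q ^ 2) (i + 2 * r) =
      qPoch q q (2 * r) * qPoch (-q) q (2 * r) *
        qPoch ((q ^ (2 * r)) ^ 2 * q ^ 2) (q ^ 2) i := by
    rw [add_comm, qPoch_add, ← qPoch_sq]; congr 2; ring
  rw [bstep, show r + N - (r + i) = N - i by omega, e1, e2, mul_inv, mul_inv]
  field_simp

lemma kerB {q : ℂ} (hq : ‖q‖ < 1) (N R : ℕ) :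
    ∑ i ∈ Finset.range (N + 1), (qPoch q q (N - i))⁻¹ * q ^ (i ^ 2 + R * i) *
      (iq q (i : ℕ) * iq q (i + R : ℕ)) = iq q N * iq q (N + R : ℕ) := by
  simp only [iq_nat]
  have h := TB_eq hq N (q ^ R) (norm_qpow_le hq _)
  have hs : ∀ N, qPoch q q (N + R) = qPoch q q R * qPoch (q ^ R * q) q N := by
    intro N; rw [add_comm, qPoch_add, mul_comm q]
  rw [hs, mul_inv, mul_left_comm, ← h, TB, Finset.mul_sum]
  refine Finset.sum_congr rfl fun i _ => ?_
  rw [hs, mul_inv, pow_add, pow_mul]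
  ring

lemma kerBr {q : ℂ} (hq : ‖q‖ < 1) (n : ℕ) (r : ℤ) :
    ∑ m ∈ Finset.range (n + 1), (q ^ (m ^ 2) / qPoch q q (n - m)) * (iq q (m - r) * iq q (m + r)) =
      q ^ (r ^ 2) * (iq q (n - r) * iq q (n + r)) := by
  have := kernel_ext (fun n m => q ^ (m ^ 2) / qPoch q q (n - m)) q q (fun r => q ^ (r ^ 2))
    (fun r => by simp) ?_ n r
  · exact this
  intro r N
  rw [← kerB hq N (2 * r), Finset.mul_sum]
  refine Finset.sum_congr rfl fun i _ => ?_
  rw [show r + N - (r + i) = N - i by omega,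
    show (q ^ ((r : ℤ) ^ 2) : ℂ) = q ^ (r ^ 2) by rw [← zpow_natCast]; push_cast; rfl]
  rw [show (r + i) ^ 2 = r ^ 2 + (i ^ 2 + 2 * r * i) by ring, pow_add]
  ring


lemma summable_norm_sq {q : ℂ} (hq : ‖q‖ < 1) : Summable (fun i : ℕ => ‖q‖ ^ (i ^ 2)) := by
  refine Summable.of_nonneg_of_le (fun i => by positivity) (fun i => ?_)
    (summable_geometric_of_lt_one (norm_nonneg q) hq)
  exact pow_le_pow_of_le_one (norm_nonneg _) hq.le (Nat.le_self_pow two_ne_zero i)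

lemma tsum_kerB {q : ℂ} (hq : ‖q‖ < 1) (R : ℕ) :
    ∑' i : ℕ, q ^ (i ^ 2 + R * i) * (iq q (i : ℕ) * iq q (i + R : ℕ)) = (qPochInf q q)⁻¹ := by
  obtain ⟨M, hM1, hM⟩ := iq_bdd hq
  have hinf := qPochInf_ne hq hq
  have hcast : Tendsto (fun N : ℕ => (N : ℤ)) atTop atTop := tendsto_natCast_atTop_atTop
  have L1 : Tendsto (fun N : ℕ => ∑' i : ℕ, iq q ((N : ℤ) - i) *
      (q ^ (i ^ 2 + R * i) * (iq q (i : ℕ) * iq q (i + R : ℕ)))) atTop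
      (𝓝 (∑' i : ℕ, (qPochInf q q)⁻¹ *
        (q ^ (i ^ 2 + R * i) * (iq q (i : ℕ) * iq q (i + R : ℕ))))) := by
    refine tendsto_tsum_of_dominated_convergence (bound := fun i => M * (‖q‖ ^ (i ^ 2) * (M * M)))
      (((summable_norm_sq hq).mul_right _).mul_left _) ?_ ?_
    · intro i
      refine Tendsto.mul_const _ ((iq_tendsto hq).comp ?_)
      exact tendsto_atTop_add_const_right _ (-(i : ℤ)) hcast
    · refine Eventually.of_forall fun N i => ?_
      rw [norm_mul, norm_mul, norm_mul, norm_pow]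
      have : ‖q‖ ^ (i ^ 2 + R * i) ≤ ‖q‖ ^ (i ^ 2) :=
        pow_le_pow_of_le_one (norm_nonneg _) hq.le (by omega)
      gcongr <;> apply hM
  have e : ∀ N : ℕ, ∑' i : ℕ, iq q ((N : ℤ) - i) *
      (q ^ (i ^ 2 + R * i) * (iq q (i : ℕ) * iq q (i + R : ℕ))) =
      iq q N * iq q (N + R : ℕ) := by
    intro N
    rw [← kerB hq N R, tsum_eq_sum (s := Finset.range (N + 1))]
    · refine Finset.sum_congr rfl fun i hi => ?_
      have := Finset.mem_range.mp hi
      rw [show (N : ℤ) - i = ((N - i : ℕ) : ℤ) by omega, iq_nat q (N - i)]; ring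
    · intro i hi
      have : ¬ i < N + 1 := fun h => hi (Finset.mem_range.mpr h)
      rw [iq_neg q (by omega)]; simp
  simp only [e] at L1
  have L2 : Tendsto (fun N : ℕ => iq q N * iq q (N + R : ℕ)) atTop
      (𝓝 ((qPochInf q q)⁻¹ * (qPochInf q q)⁻¹)) := by
    refine ((iq_tendsto hq).comp hcast).mul ((iq_tendsto hq).comp ?_)
    exact hcast.comp (tendsto_add_atTop_nat R)
  have := tendsto_nhds_unique L1 L2
  rw [tsum_mul_left] at this
  exact mul_left_cancel₀ (inv_ne_zero hinf) this

lemma tsum_shift {q : ℂ} (hq : ‖q‖ < 1) (δ s : ℕ) :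
    ∑' n : ℕ, q ^ (n ^ 2 + δ * n) * (iq q ((n : ℤ) - s) * iq q ((n : ℤ) + s + δ)) =
      q ^ (s ^ 2 + δ * s) * (qPochInf q q)⁻¹ := by
  rw [← tsum_kerB hq (2 * s + δ), ← tsum_mul_left,
    ← (add_left_injective s).tsum_eq (f := fun n : ℕ => q ^ (n ^ 2 + δ * n) *
      (iq q ((n : ℤ) - s) * iq q ((n : ℤ) + s + δ)))]
  · refine tsum_congr fun i => ?_
    rw [show ((i + s : ℕ) : ℤ) - s = (i : ℕ) by push_cast; ring,
      show ((i + s : ℕ) : ℤ) + s + δ = (i + (2 * s + δ) : ℕ) by push_cast; ring]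
    rw [← mul_assoc (q ^ (s ^ 2 + δ * s)), ← pow_add]
    congr 2
    ring
  · intro n hn
    by_contra hcon
    apply hn
    have : n < s := by
      by_contra h
      exact hcon ⟨n - s, by simp only []; omega⟩
    simp only []
    rw [iq_neg q (by omega)]; simp

lemma tsum_A {q : ℂ} (hq : ‖q‖ < 1) (r : ℤ) :
    ∑' n : ℕ, q ^ (n ^ 2) * (iq q ((n : ℤ) - r) * iq q ((n : ℤ) + r)) =
      q ^ (r ^ 2) * (qPochInf q q)⁻¹ := by
  have key : ∀ s : ℕ, ∑' n : ℕ, q ^ (n ^ 2) * (iq q ((n : ℤ) - s) * iq q ((n : ℤ) + s)) =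
      q ^ ((s : ℤ) ^ 2) * (qPochInf q q)⁻¹ := by
    intro s
    have := tsum_shift hq 0 s
    simp only [zero_mul, add_zero, Nat.cast_zero] at this
    rw [this, ← zpow_natCast]; push_cast; rfl
  rcases le_total 0 r with hr | hr
  · obtain ⟨s, rfl⟩ := Int.eq_ofNat_of_zero_le hr
    exact key s
  · obtain ⟨s, hs⟩ := Int.eq_ofNat_of_zero_le (neg_nonneg.mpr hr)
    obtain rfl : r = -(s : ℤ) := by omega
    have := key s
    rw [neg_sq]
    simp only [sub_neg_eq_add, ← sub_eq_add_neg]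
    simp only [mul_comm (iq q (_ + _))]
    exact this

lemma tsum_B {q : ℂ} (hq : ‖q‖ < 1) (r : ℤ) :
    ∑' n : ℕ, q ^ (n ^ 2 + n) * (iq q ((n : ℤ) + r) * iq q ((n : ℤ) + 1 - r)) =
      q ^ (r ^ 2 - r) * (qPochInf q q)⁻¹ := by
  have key : ∀ s : ℕ, ∑' n : ℕ, q ^ (n ^ 2 + n) * (iq q ((n : ℤ) - s) * iq q ((n : ℤ) + s + 1)) =
      q ^ ((s : ℤ) ^ 2 + s) * (qPochInf q q)⁻¹ := by
    intro s
    have := tsum_shift hq 1 s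
    simp only [one_mul, Nat.cast_one] at this
    rw [this, ← zpow_natCast]; push_cast; rfl
  rcases lt_or_ge 0 r with hr | hr
  · obtain ⟨s, hs⟩ := Int.eq_ofNat_of_zero_le (show 0 ≤ r - 1 by omega)
    obtain rfl : r = (s : ℤ) + 1 := by omega
    have := key s
    rw [show ((s : ℤ) + 1) ^ 2 - (s + 1) = (s : ℤ) ^ 2 + s by ring, ← this]
    refine tsum_congr fun n => ?_
    rw [show (n : ℤ) + 1 - (s + 1) = n - s by ring, show (n : ℤ) + (s + 1) = n + s + 1 by ring,
      mul_comm (iq q _)]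
  · obtain ⟨s, hs⟩ := Int.eq_ofNat_of_zero_le (neg_nonneg.mpr hr)
    obtain rfl : r = -(s : ℤ) := by omega
    have := key s
    rw [neg_sq, sub_neg_eq_add, ← this]
    refine tsum_congr fun n => ?_
    rw [show (n : ℤ) + 1 - -(s : ℤ) = n + s + 1 by ring, ← sub_eq_add_neg]


/-- The binomial `r(r-1)/2` for integers. -/
def ch (r : ℤ) : ℤ := r * (r - 1) / 2

lemma two_mul_ch (r : ℤ) : 2 * ch r = r * (r - 1) := by
  unfold ch
  exact Int.mul_ediv_cancel' (Int.even_mul_pred_self r).two_dvd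

lemma ch_add_one (r : ℤ) : ch (r + 1) = ch r + r := by
  have h1 := two_mul_ch r
  have h2 := two_mul_ch (r + 1)
  linarith

lemma ch_reflect (r : ℤ) : ch (1 - r) = ch r := by
  have h1 := two_mul_ch r
  have h2 := two_mul_ch (1 - r)
  linarith

lemma ch_neg (r : ℤ) : ch (-r) = ch r + r := by
  have h1 := two_mul_ch r
  have h2 := two_mul_ch (-r)
  linarith

lemma ch_zero : ch 0 = 0 := by simp [ch]

lemma ch_nonneg (r : ℤ) : 0 ≤ ch r := by
  have h1 := two_mul_ch r
  rcases le_or_gt r 0 with h | h <;> nlinarith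

/-- Theta coefficients. -/
noncomputable def th (z q : ℂ) (r : ℤ) : ℂ := (-1) ^ r * z ^ r * q ^ ch r

lemma th_add_one {z q : ℂ} (hz : z ≠ 0) (h0 : q ≠ 0) (r : ℤ) :
    th z q (r + 1) = - (z * q ^ r) * th z q r := by
  unfold th
  rw [ch_add_one, zpow_add₀ h0, zpow_add_one₀ hz, zpow_add_one₀ (by norm_num)]
  ring

lemma summ_iq (q : ℂ) (α : ℤ → ℂ) (a b : ℤ) :
    Summable (fun r : ℤ => α r * (iq q (a - r) * iq q (b + r))) := by
  refine summable_of_ne_finset_zero (s := Finset.Icc (-b) a) fun r hr => ?_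
  rw [Finset.mem_Icc, not_and_or] at hr
  rcases hr with h | h
  · rw [iq_neg q (show b + r < 0 by omega)]; simp
  · rw [iq_neg q (show a - r < 0 by omega)]; simp

lemma finite_jtp {q z : ℂ} (hz : z ≠ 0) (h0 : q ≠ 0) (hq : ‖q‖ < 1) (n : ℕ) :
    ∑' r : ℤ, th z q r * (iq q (n - r) * iq q (n + r)) =
      qPoch z q n * qPoch (q / z) q n * iq q (2 * n : ℕ) := by
  induction n with
  | zero =>
    rw [tsum_eq_single 0]
    · simp [th, ch_zero, iq, qPoch_zero]
    · intro r hr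
      rcases lt_or_gt_of_ne hr with h | h
      · rw [iq_neg q (show ((0 : ℕ) : ℤ) + r < 0 by simpa using h)]; simp
      · rw [iq_neg q (show ((0 : ℕ) : ℤ) - r < 0 by simpa using h)]; simp
  | succ n ih =>
    set F : ℤ → ℂ := fun r => th z q r * (iq q (n - r) * iq q (n + r)) with hF
    have hs : Summable F := summ_iq q _ _ _
    have s1 : z * q ^ n * ∑' r, F r = ∑' r, z * q ^ n * F (r - 1) := by
      rw [← tsum_mul_left, ← (Equiv.subRight (1 : ℤ)).tsum_eq (fun r => z * q ^ n * F r)]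
      rfl
    have s2 : q ^ (n + 1) / z * ∑' r, F r = ∑' r, q ^ (n + 1) / z * F (r + 1) := by
      rw [← tsum_mul_left, ← (Equiv.addRight (1 : ℤ)).tsum_eq (fun r => q ^ (n + 1) / z * F r)]
      rfl
    have u1 : Summable (fun r => z * q ^ n * F (r - 1)) :=
      ((Equiv.subRight (1 : ℤ)).summable_iff.mpr hs).mul_left _
    have u2 : Summable (fun r => q ^ (n + 1) / z * F (r + 1)) :=
      ((Equiv.addRight (1 : ℤ)).summable_iff.mpr hs).mul_left _
    have key : ((1 - q ^ (2 * n + 2)) * (1 - q ^ (2 * n + 1))) *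
        ∑' r : ℤ, th z q r * (iq q ((n + 1 : ℕ) - r) * iq q ((n + 1 : ℕ) + r)) =
        (1 - z * q ^ n) * (1 - q / z * q ^ n) * ∑' r, F r := by
      have : (1 - z * q ^ n) * (1 - q / z * q ^ n) * ∑' r, F r =
          (1 + q ^ (2 * n + 1)) * (∑' r, F r) - z * q ^ n * (∑' r, F r)
            - q ^ (n + 1) / z * ∑' r, F r := by
        field_simp
        ring
      rw [this, s1, s2, ← tsum_mul_left, ← tsum_mul_left,
        ← (hs.mul_left _).tsum_sub u1, ← ((hs.mul_left _).sub u1).tsum_sub u2]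
      refine tsum_congr fun r => ?_
      simp only [hF]
      have t1 : z * q ^ n * th z q (r - 1) = - (q ^ ((n : ℤ) + 1 - r)) * th z q r := by
        have := th_add_one hz h0 (r - 1)
        rw [sub_add_cancel] at this
        rw [this, show (n : ℤ) + 1 - r = n - (r - 1) by ring, zpow_sub₀ h0, zpow_natCast]
        have := zpow_ne_zero (r - 1) h0
        field_simp
      have t2 : q ^ (n + 1) / z * th z q (r + 1) = - (q ^ ((n : ℤ) + 1 + r)) * th z q r := by
        rw [th_add_one hz h0, zpow_add₀ h0, ← Nat.cast_succ, zpow_natCast]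
        field_simp
      set x := q ^ ((n : ℤ) + 1 - r) with hx
      set y := q ^ ((n : ℤ) + 1 + r) with hy
      have hx1 : q ^ ((n : ℤ) - r) = x / q := by
        rw [hx, show (n : ℤ) - r = n + 1 - r - 1 by ring, zpow_sub_one₀ h0]; rfl
      have hy1 : q ^ ((n : ℤ) + r) = y / q := by
        rw [hy, show (n : ℤ) + r = n + 1 + r - 1 by ring, zpow_sub_one₀ h0]; rfl
      have hxy : q ^ (2 * n + 2) = x * y := by
        rw [hx, hy, ← zpow_add₀ h0, ← zpow_natCast]; congr 1; push_cast; ring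
      have hxy1 : q ^ (2 * n + 1) = x * y / q := by
        rw [← hxy]; field_simp; ring
      have i1 : iq q ((n : ℤ) - r) = (1 - x) * iq q ((n : ℤ) + 1 - r) := by
        rw [hx, ← iq_rec hq]; congr 1; ring
      have i2 : iq q ((n : ℤ) + r) = (1 - y) * iq q ((n : ℤ) + 1 + r) := by
        rw [hy, ← iq_rec hq]; congr 1; ring
      have i3 : iq q ((n : ℤ) - (r + 1)) = (1 - x / q) * ((1 - x) * iq q ((n : ℤ) + 1 - r)) := by
        rw [← i1, ← hx1, ← iq_rec hq]; congr 1; ring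
      have i4 : iq q ((n : ℤ) + (r - 1)) = (1 - y / q) * ((1 - y) * iq q ((n : ℤ) + 1 + r)) := by
        rw [← i2, ← hy1, ← iq_rec hq]; congr 1; ring
      rw [← mul_assoc (z * q ^ n), ← mul_assoc (q ^ (n + 1) / z), t1, t2, i1, i2, i3, i4,
        show (n : ℤ) - (r - 1) = n + 1 - r by ring, show (n : ℤ) + (r + 1) = n + 1 + r by ring,
        hxy, hxy1]
      push_cast
      field_simp
      ring
    have p1 : ‖q ^ (2 * n + 2)‖ < 1 := by
      rw [norm_pow]; exact pow_lt_one₀ (norm_nonneg _) hq (by omega)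
    have p2 : ‖q ^ (2 * n + 1)‖ < 1 := by
      rw [norm_pow]; exact pow_lt_one₀ (norm_nonneg _) hq (by omega)
    have p1 := one_sub_ne p1
    have p2 := one_sub_ne p2
    apply mul_left_cancel₀ (mul_ne_zero p1 p2)
    rw [key, ih, qPoch_succ, qPoch_succ]
    have r1 := iq_rec hq ((2 * n + 2 : ℕ) : ℤ)
    have r2 := iq_rec hq ((2 * n + 1 : ℕ) : ℤ)
    rw [zpow_natCast] at r1 r2
    rw [show ((2 * n + 2 : ℕ) : ℤ) - 1 = (2 * n + 1 : ℕ) by push_cast; ring] at r1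
    rw [show ((2 * n + 1 : ℕ) : ℤ) - 1 = (2 * n : ℕ) by push_cast; ring] at r2
    rw [r2, r1, show 2 * (n + 1) = 2 * n + 2 by ring]
    ring

lemma norm_th (z q : ℂ) (r : ℤ) : ‖th z q r‖ = ‖z‖ ^ r * ‖q‖ ^ ch r := by
  simp [th]

lemma zpow_le_one_of_nonneg {a : ℝ} (h0 : 0 ≤ a) (h1 : a ≤ 1) {m : ℤ} (hm : 0 ≤ m) :
    a ^ m ≤ 1 := by
  obtain ⟨s, rfl⟩ := Int.eq_ofNat_of_zero_le hm
  rw [zpow_natCast]; exact pow_le_one₀ h0 h1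

lemma summable_th {q z : ℂ} (h0 : q ≠ 0) (hq : ‖q‖ < 1) (hz1 : ‖z‖ < 1)
    (hz2 : ‖q / z‖ < 1) : Summable (fun r : ℤ => ‖th z q r‖) := by
  have hb : ∀ r, ‖q‖ ^ ch r ≤ 1 := fun r =>
    zpow_le_one_of_nonneg (norm_nonneg _) hq.le (ch_nonneg r)
  refine Summable.of_nat_of_neg ?_ ?_
  · refine Summable.of_nonneg_of_le (fun i => norm_nonneg _) (fun i => ?_)
      (summable_geometric_of_lt_one (norm_nonneg z) hz1)
    rw [norm_th, zpow_natCast]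
    exact mul_le_of_le_one_right (by positivity) (hb _)
  · refine Summable.of_nonneg_of_le (fun i => norm_nonneg _) (fun i => ?_)
      (summable_geometric_of_lt_one (norm_nonneg (q / z)) hz2)
    rw [norm_th, ch_neg, zpow_add₀ (norm_ne_zero_iff.mpr h0), zpow_neg, zpow_natCast, zpow_natCast,
      norm_div, div_pow, div_eq_mul_inv]
    calc (‖z‖ ^ i)⁻¹ * (‖q‖ ^ ch i * ‖q‖ ^ i) = (‖q‖ ^ i * (‖z‖ ^ i)⁻¹) * ‖q‖ ^ ch i := by ring
      _ ≤ _ := mul_le_of_le_one_right (by positivity) (hb _)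

lemma jtp {q z : ℂ} (hz : z ≠ 0) (h0 : q ≠ 0) (hq : ‖q‖ < 1) (hz1 : ‖z‖ < 1)
    (hz2 : ‖q / z‖ < 1) :
    ∑' r : ℤ, th z q r = qPochInf q q * qPochInf z q * qPochInf (q / z) q := by
  obtain ⟨M, hM1, hM⟩ := iq_bdd hq
  have hinf := qPochInf_ne hq hq
  have hcast : Tendsto (fun N : ℕ => (N : ℤ)) atTop atTop := tendsto_natCast_atTop_atTop
  have L1 : Tendsto (fun n : ℕ => ∑' r : ℤ, th z q r * (iq q (n - r) * iq q (n + r))) atTop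
      (𝓝 (∑' r : ℤ, th z q r * ((qPochInf q q)⁻¹ * (qPochInf q q)⁻¹))) := by
    refine tendsto_tsum_of_dominated_convergence (bound := fun r => ‖th z q r‖ * (M * M))
      ((summable_th h0 hq hz1 hz2).mul_right _) ?_ ?_
    · intro r
      refine Tendsto.const_mul _ (((iq_tendsto hq).comp ?_).mul ((iq_tendsto hq).comp ?_))
      · exact tendsto_atTop_add_const_right _ (-r) hcast
      · exact tendsto_atTop_add_const_right _ r hcast
    · refine Eventually.of_forall fun N i => ?_
      rw [norm_mul, norm_mul]
      gcongr <;> apply hM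
  simp only [finite_jtp hz h0 hq] at L1
  have L2 : Tendsto (fun n : ℕ => qPoch z q n * qPoch (q / z) q n * iq q (2 * n : ℕ)) atTop
      (𝓝 (qPochInf z q * qPochInf (q / z) q * (qPochInf q q)⁻¹)) := by
    refine ((qPoch_tendsto z hq).mul (qPoch_tendsto _ hq)).mul ((iq_tendsto hq).comp ?_)
    exact hcast.comp (tendsto_id.const_mul_atTop' two_pos)
  have := tendsto_nhds_unique L1 L2
  rw [tsum_mul_right] at this
  field_simp at this
  rw [this]


/-- Bilateral Bailey transform at `a = 1`. -/
noncomputable def bt (q : ℂ) (α : ℤ → ℂ) (n : ℕ) : ℂ :=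
  ∑' r : ℤ, α r * (iq q (n - r) * iq q (n + r))

lemma bt_kernel (w : ℕ → ℂ) (q p : ℂ) (α g : ℤ → ℂ) (n : ℕ)
    (h : ∀ r : ℤ, ∑ m ∈ Finset.range (n + 1), w m * (iq p (m - r) * iq p (m + r)) =
      g r * (iq q (n - r) * iq q (n + r))) :
    ∑ m ∈ Finset.range (n + 1), w m * bt p α m = bt q (fun r => g r * α r) n := by
  unfold bt
  simp only [← tsum_mul_left]
  rw [← Summable.tsum_finsetSum (f := fun (m : ℕ) (r : ℤ) =>
    w m * (α r * (iq p (m - r) * iq p (m + r)))) fun m _ => (summ_iq p α m m).mul_left _]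
  refine tsum_congr fun r => ?_
  rw [mul_right_comm, ← h r, Finset.sum_mul]
  refine Finset.sum_congr rfl fun m _ => ?_
  ring

lemma bt_D {q : ℂ} (hq : ‖q‖ < 1) (α : ℤ → ℂ) (n : ℕ) :
    ∑ m ∈ Finset.range (n + 1), bstep q n m * bt (q ^ 2) α m = bt q α n := by
  have := bt_kernel (bstep q n) q (q ^ 2) α (fun _ => 1) n
    (fun r => by rw [kerD hq, one_mul])
  simpa using this

lemma bt_B {q : ℂ} (hq : ‖q‖ < 1) (α : ℤ → ℂ) (n : ℕ) :
    ∑ m ∈ Finset.range (n + 1), (q ^ (m ^ 2) / qPoch q q (n - m)) * bt q α m =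
      bt q (fun r => q ^ (r ^ 2) * α r) n :=
  bt_kernel _ q q α _ n fun r => kerBr hq n r

lemma tsum_antisymm (f : ℤ → ℂ) (hf : ∀ r, f (1 - r) = - f r) : ∑' r, f r = 0 := by
  have h := (Equiv.subLeft (1 : ℤ)).tsum_eq f
  simp only [Equiv.subLeft_apply, hf, tsum_neg] at h
  have : (2 : ℂ) * ∑' r, f r = 0 := by
    rw [two_mul]; nth_rewrite 1 [← h]; ring
  simpa using this

/-- The lattice-type lemma: a symmetric kernel. -/
lemma bt_anti {q : ℂ} (h0 : q ≠ 0) (hq : ‖q‖ < 1) (α : ℤ → ℂ) (n : ℕ)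
    (hα : ∀ r, α (1 - r) * q ^ r = - (α r * q ^ (1 - r))) :
    bt q α n = ∑' r : ℤ, α r * (iq q (n + 1 - r) * iq q (n + r)) := by
  have e : ∀ r : ℤ, α r * (iq q (n - r) * iq q (n + r)) =
      α r * (iq q (n + 1 - r) * iq q (n + r)) -
      q ^ n * ((α r * q ^ (1 - r)) * (iq q (n + 1 - r) * iq q (n + r))) := by
    intro r
    have := iq_rec hq ((n : ℤ) + 1 - r)
    rw [show (n : ℤ) + 1 - r - 1 = n - r by ring, show (n : ℤ) + 1 - r = n + (1 - r) by ring,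
      zpow_add₀ h0, zpow_natCast, show (n : ℤ) + (1 - r) = n + 1 - r by ring] at this
    rw [this]; ring
  have z : ∑' r : ℤ, (α r * q ^ (1 - r)) * (iq q (n + 1 - r) * iq q (n + r)) = 0 := by
    apply tsum_antisymm
    intro r
    rw [show (1 : ℤ) - (1 - r) = r by ring, hα, show (n : ℤ) + 1 - (1 - r) = n + r by ring,
      show (n : ℤ) + (1 - r) = n + 1 - r by ring]
    ring
  unfold bt
  simp only [e]
  rw [(summ_iq q α (n + 1) n).tsum_sub ((summ_iq q _ (n + 1) n).mul_left _), tsum_mul_left, z]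
  simp

lemma bt_lattice {q : ℂ} (h0 : q ≠ 0) (hq : ‖q‖ < 1) (α : ℤ → ℂ) (n : ℕ)
    (hα : ∀ r, α (1 - r) = - α r) :
    (q ^ n)⁻¹ * bt q α n = bt q (fun r => α r * q ^ r) n := by
  have h1 := bt_anti h0 hq (fun r => α r * q ^ r) n (fun r => by
    simp only [hα]; ring)
  rw [h1]
  have e : ∀ r : ℤ, α r * (iq q (n - r) * iq q (n + r)) =
      α r * (iq q (n + 1 - r) * iq q (n + r)) -
      q ^ n * ((α r * q ^ (1 - r)) * (iq q (n + 1 - r) * iq q (n + r))) := by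
    intro r
    have := iq_rec hq ((n : ℤ) + 1 - r)
    rw [show (n : ℤ) + 1 - r - 1 = n - r by ring, show (n : ℤ) + 1 - r = n + (1 - r) by ring,
      zpow_add₀ h0, zpow_natCast, show (n : ℤ) + (1 - r) = n + 1 - r by ring] at this
    rw [this]; ring
  have sy : ∀ r : ℤ, iq q (n + 1 - (1 - r)) * iq q (n + (1 - r)) =
      iq q (n + 1 - r) * iq q (n + r) := by
    intro r
    rw [show (n : ℤ) + 1 - (1 - r) = n + r by ring,
      show (n : ℤ) + (1 - r) = n + 1 - r by ring, mul_comm]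
  have z : ∑' r : ℤ, α r * (iq q (n + 1 - r) * iq q (n + r)) = 0 := by
    apply tsum_antisymm
    intro r
    rw [hα, sy]; ring
  have f : ∑' r : ℤ, (α r * q ^ (1 - r)) * (iq q (n + 1 - r) * iq q (n + r)) =
      - ∑' r : ℤ, (α r * q ^ r) * (iq q (n + 1 - r) * iq q (n + r)) := by
    rw [← (Equiv.subLeft (1 : ℤ)).tsum_eq, ← tsum_neg]
    refine tsum_congr fun r => ?_
    simp only [Equiv.subLeft_apply]
    rw [sy, hα, show (1 : ℤ) - (1 - r) = r by ring]; ring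
  unfold bt
  simp only [e]
  rw [(summ_iq q α (n + 1) n).tsum_sub ((summ_iq q _ (n + 1) n).mul_left _), tsum_mul_left, z, f]
  have := pow_ne_zero n h0
  field_simp
  simp

/-- Iterated finite sums. -/
def chain {R : Type*} [Semiring R] : ℕ → (ℕ → ℕ → ℕ → R) → ℕ → R
  | 0, _, n => if n = 0 then 1 else 0
  | L + 1, f, n => ∑ m ∈ Finset.range (n + 1), f 0 n m * chain L (fun i => f (i + 1)) m

lemma th_one_anti (Q : ℂ) (r : ℤ) : th 1 Q (1 - r) = - th 1 Q r := by
  unfold th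
  rw [ch_reflect, zpow_sub₀ (by norm_num)]
  have : ((-1 : ℂ) ^ r)⁻¹ = (-1) ^ r := by
    rw [← inv_zpow]; norm_num
  rw [div_eq_mul_inv, this]; simp

lemma chain_unmod (k : ℕ) : ∀ (q : ℂ), q ≠ 0 → ‖q‖ < 1 → ∀ n,
    chain k (fun i => bstep (q ^ 2 ^ i)) n = bt q (th 1 (q ^ 2 ^ k)) n := by
  induction k with
  | zero =>
    intro q h0 hq n
    rw [bt, pow_zero, pow_one, finite_jtp one_ne_zero h0 hq, chain]
    cases n with
    | zero => simp [qPoch_zero, iq]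
    | succ n => simp [qPoch_succ' 1]
  | succ k ih =>
    intro q h0 hq n
    rw [chain, ← bt_D hq]
    refine Finset.sum_congr rfl fun m _ => ?_
    have := ih (q ^ 2) (pow_ne_zero _ h0) (sq_lt hq) m
    simp only [← pow_mul, ← pow_succ'] at this
    rw [this]; simp

/-- Weights with one modification at level `j`. -/
noncomputable def mstep (q : ℂ) (j i n m : ℕ) : ℂ :=
  (if i = j then ((q ^ 2 ^ i) ^ n)⁻¹ else 1) * bstep (q ^ 2 ^ i) n m

lemma chain_mod (k j : ℕ) (hj : j < k) : ∀ (q : ℂ), q ≠ 0 → ‖q‖ < 1 → ∀ n,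
    chain k (mstep q j) n = bt q (th (q ^ 2 ^ j) (q ^ 2 ^ k)) n := by
  induction j generalizing k with
  | zero =>
    intro q h0 hq n
    obtain ⟨k, rfl⟩ : ∃ k', k = k' + 1 := ⟨k - 1, by omega⟩
    have h1 := bt_lattice h0 hq (th 1 (q ^ 2 ^ (k + 1))) n (th_one_anti _)
    have h2 := chain_unmod (k + 1) q h0 hq n
    have h3 : chain (k + 1) (mstep q 0) n =
        (q ^ n)⁻¹ * chain (k + 1) (fun i => bstep (q ^ 2 ^ i)) n := by
      simp only [chain, Finset.mul_sum]
      refine Finset.sum_congr rfl fun m _ => ?_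
      have : (fun i => mstep q 0 (i + 1)) = fun i => bstep (q ^ 2 ^ (i + 1)) := by
        funext i n m
        simp [mstep]
      rw [this, mstep]
      simp only [if_true, pow_zero, pow_one]
      ring
    rw [h3, h2, h1]
    congr 1
    funext r
    simp [th]
    ring
  | succ j ih =>
    intro q h0 hq n
    obtain ⟨k, rfl⟩ : ∃ k', k = k' + 1 := ⟨k - 1, by omega⟩
    rw [chain, ← bt_D hq]
    refine Finset.sum_congr rfl fun m _ => ?_
    have := ih k (by omega) (q ^ 2) (pow_ne_zero _ h0) (sq_lt hq) m
    simp only [← pow_mul, ← pow_succ'] at this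
    rw [← this]
    congr 1
    · simp [mstep]
    · congr 1
      funext i n m
      have e : (q ^ 2) ^ 2 ^ i = q ^ 2 ^ (i + 1) := by rw [← pow_mul, ← pow_succ']
      simp [mstep, e]


/-- Extension of a tuple by zero. -/
def text (k : ℕ) (s : Fin (k + 1) → ℕ) : ℕ → ℕ := fun m => if h : m < k + 1 then s ⟨m, h⟩ else 0

/-- Product weight of a tuple. -/
def tphi {R : Type*} [CommSemiring R] (k : ℕ) (f : ℕ → ℕ → ℕ → R) (s : Fin (k + 1) → ℕ) : R :=
  ∏ i ∈ Finset.range (k + 1), f i (text k s i) (text k s (i + 1))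

open Classical in
/-- Antitone tuples with given first entry. -/
noncomputable def tups (k n : ℕ) : Finset (Fin (k + 1) → ℕ) :=
  (Fintype.piFinset (fun _ => Finset.range (n + 1))).filter (fun s => Antitone s ∧ s 0 = n)

lemma mem_tups {k n : ℕ} {s : Fin (k + 1) → ℕ} : s ∈ tups k n ↔ Antitone s ∧ s 0 = n := by
  classical
  simp only [tups, Finset.mem_filter, Fintype.mem_piFinset, Finset.mem_range]
  refine ⟨fun h => h.2, fun h => ⟨fun i => ?_, h⟩⟩
  have := h.1 (Fin.zero_le i)
  omega

lemma text_cons_zero (k n : ℕ) (s : Fin (k + 1) → ℕ) :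
    text (k + 1) (Fin.cons n s) 0 = n := by
  simp [text]

lemma text_cons_succ (k n : ℕ) (s : Fin (k + 1) → ℕ) (i : ℕ) :
    text (k + 1) (Fin.cons n s) (i + 1) = text k s i := by
  unfold text
  by_cases h : i < k + 1
  · rw [dif_pos h, dif_pos (by omega)]
    exact Fin.cons_succ (α := fun _ => ℕ) n s ⟨i, h⟩
  · rw [dif_neg h, dif_neg (by omega)]

lemma text_zero (k : ℕ) (s : Fin (k + 1) → ℕ) : text k s 0 = s 0 := by
  simp [text]

lemma tphi_cons {R : Type*} [CommSemiring R] (k n : ℕ) (f : ℕ → ℕ → ℕ → R)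
    (s : Fin (k + 1) → ℕ) :
    tphi (k + 1) f (Fin.cons n s) = f 0 n (s 0) * tphi k (fun i => f (i + 1)) s := by
  unfold tphi
  rw [Finset.prod_range_succ', mul_comm]
  simp only [text_cons_succ, text_zero, zero_add, Fin.cons_zero]

lemma sum_tups {R : Type*} [CommSemiring R] (k : ℕ) : ∀ (f : ℕ → ℕ → ℕ → R) (n : ℕ),
    ∑ s ∈ tups k n, tphi k f s = chain (k + 1) f n := by
  induction k with
  | zero =>
    intro f n
    have : tups 0 n = {fun _ => n} := by
      ext s
      rw [mem_tups, Finset.mem_singleton]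
      constructor
      · rintro ⟨-, h⟩
        funext i
        have hi : i = 0 := Fin.ext (by omega)
        rw [hi, h]
      · rintro rfl
        exact ⟨fun _ _ _ => le_rfl, rfl⟩
    rw [this, Finset.sum_singleton]
    simp only [chain]
    rw [Finset.sum_eq_single 0]
    · simp [tphi, text]
    · intro m _ hm; simp [hm]
    · simp
  | succ k ih =>
    intro f n
    rw [chain]
    simp only [← ih, Finset.mul_sum]
    rw [Finset.sum_sigma']
    refine Finset.sum_bij' (fun s _ => ⟨s 1, Fin.tail s⟩) (fun x _ => Fin.cons n x.2) ?_ ?_ ?_ ?_ ?_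
    · intro s hs
      obtain ⟨h1, h2⟩ := mem_tups.mp hs
      rw [Finset.mem_sigma, mem_tups, Finset.mem_range]
      refine ⟨?_, ?_, ?_⟩
      · have := h1 (Fin.zero_le 1)
        simp only []
        omega
      · intro i j hij
        exact h1 (Fin.succ_le_succ_iff.mpr hij)
      · rfl
    · rintro ⟨m, s⟩ hx
      rw [Finset.mem_sigma, mem_tups, Finset.mem_range] at hx
      obtain ⟨h1, h2, h3⟩ := hx
      simp only [] at h1 h2 h3
      rw [mem_tups]
      refine ⟨?_, by simp⟩
      intro i j hij
      induction j using Fin.cases with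
      | zero =>
        have : i = 0 := Fin.le_zero_iff.mp hij
        rw [this]
      | succ j =>
        induction i using Fin.cases with
        | zero =>
          have := h2 (Fin.zero_le j)
          simp only [Fin.cons_zero, Fin.cons_succ]
          omega
        | succ i =>
          simp only [Fin.cons_succ]
          exact h2 (Fin.succ_le_succ_iff.mp hij)
    · intro s hs
      obtain ⟨h1, h2⟩ := mem_tups.mp hs
      simp only []
      rw [← h2]; exact Fin.cons_self_tail s
    · rintro ⟨m, s⟩ hx
      rw [Finset.mem_sigma, mem_tups, Finset.mem_range] at hx
      obtain ⟨h1, h2, h3⟩ := hx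
      simp only [] at h3
      subst h3
      rfl
    · intro s hs
      obtain ⟨h1, h2⟩ := mem_tups.mp hs
      have : s = Fin.cons n (Fin.tail s) := by
        rw [← h2]; exact (Fin.cons_self_tail s).symm
      conv_lhs => rw [this]
      rw [tphi_cons]
      rfl

/-- Antitone tuples fibred over the first entry. -/
noncomputable def tupEquiv (k : ℕ) :
    (Σ n : ℕ, {s // s ∈ tups k n}) ≃ {s : Fin (k + 1) → ℕ // Antitone s} where
  toFun x := ⟨x.2.1, (mem_tups.mp x.2.2).1⟩
  invFun s := ⟨s.1 0, ⟨s.1, mem_tups.mpr ⟨s.2, rfl⟩⟩⟩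
  left_inv := by
    rintro ⟨n, s, hs⟩
    obtain ⟨h1, h2⟩ := mem_tups.mp hs
    subst h2
    rfl
  right_inv := by
    rintro ⟨s, hs⟩
    rfl

lemma tsum_chain (k : ℕ) (f : ℕ → ℕ → ℕ → ℂ)
    (hs : Summable fun n => chain (k + 1) (fun i n m => ‖f i n m‖) n) :
    ∑' s : {s : Fin (k + 1) → ℕ // Antitone s}, tphi k f s.1 = ∑' n, chain (k + 1) f n := by
  rw [← (tupEquiv k).tsum_eq]
  have hsum : Summable (fun x : (Σ n : ℕ, {s // s ∈ tups k n}) =>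
      tphi k f ((tupEquiv k) x).1) := by
    apply Summable.of_norm
    rw [summable_sigma_of_nonneg (fun _ => norm_nonneg _)]
    refine ⟨fun n => (hasSum_fintype _).summable, ?_⟩
    refine hs.congr fun n => ?_
    rw [tsum_fintype, ← sum_tups, ← Finset.sum_coe_sort]
    refine Finset.sum_congr rfl fun s _ => ?_
    simp [tphi, tupEquiv, norm_prod]
  rw [hsum.tsum_sigma]
  refine tsum_congr fun n => ?_
  rw [tsum_fintype, ← sum_tups, ← Finset.sum_coe_sort (tups k n)]
  rfl

lemma succ_le_two_pow (n : ℕ) : ((n : ℝ) + 1) ≤ 2 ^ n := by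
  have : n + 1 ≤ 2 ^ n := Nat.lt_two_pow_self
  exact_mod_cast this

lemma chain_bound (L : ℕ) : ∀ (f : ℕ → ℕ → ℕ → ℝ),
    (∀ i, ∃ K A : ℝ, 1 ≤ K ∧ 1 ≤ A ∧ ∀ n m, m ≤ n → 0 ≤ f i n m ∧ f i n m ≤ K * A ^ n) →
    ∃ K A : ℝ, 1 ≤ K ∧ 1 ≤ A ∧ ∀ n, 0 ≤ chain L f n ∧ chain L f n ≤ K * A ^ n := by
  induction L with
  | zero =>
    intro f _
    refine ⟨1, 1, le_rfl, le_rfl, fun n => ?_⟩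
    rw [chain]
    split_ifs <;> simp
  | succ L ih =>
    intro f hf
    obtain ⟨K1, A1, hK1, hA1, h1⟩ := ih (fun i => f (i + 1)) (fun i => hf (i + 1))
    obtain ⟨K2, A2, hK2, hA2, h2⟩ := hf 0
    refine ⟨K2 * K1, 2 * (A2 * A1), by nlinarith, by nlinarith, fun n => ?_⟩
    rw [chain]
    refine ⟨Finset.sum_nonneg fun m hm => ?_, ?_⟩
    · have := Finset.mem_range.mp hm
      exact mul_nonneg (h2 n m (by omega)).1 (h1 m).1
    · calc _ ≤ ∑ m ∈ Finset.range (n + 1), (K2 * A2 ^ n) * (K1 * A1 ^ n) := by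
            refine Finset.sum_le_sum fun m hm => ?_
            have hm := Finset.mem_range.mp hm
            have a := h2 n m (by omega)
            have b := h1 m
            have c : A1 ^ m ≤ A1 ^ n := pow_le_pow_right₀ hA1 (by omega)
            refine mul_le_mul a.2 (b.2.trans ?_) b.1 (a.1.trans a.2)
            gcongr
        _ = ((n : ℝ) + 1) * ((K2 * A2 ^ n) * (K1 * A1 ^ n)) := by simp
        _ ≤ 2 ^ n * ((K2 * A2 ^ n) * (K1 * A1 ^ n)) := by
            gcongr
            exact succ_le_two_pow n
        _ = _ := by rw [mul_pow, mul_pow]; ring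

lemma summable_sq_exp {r : ℝ} (hr0 : 0 ≤ r) (hr : r < 1) {B : ℝ} (hB : 0 ≤ B) :
    Summable (fun n : ℕ => r ^ (n ^ 2) * B ^ n) := by
  have h : Tendsto (fun n : ℕ => r ^ n * B) atTop (𝓝 0) := by
    simpa using (tendsto_pow_atTop_nhds_zero_of_lt_one hr0 hr).mul_const B
  have h2 : ∀ᶠ n : ℕ in atTop, r ^ n * B < 1 / 2 := h.eventually (gt_mem_nhds (by norm_num))
  refine Summable.of_norm_bounded_eventually_nat (g := fun n => (1 / 2 : ℝ) ^ n)
    (summable_geometric_of_lt_one (by norm_num) (by norm_num)) ?_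
  filter_upwards [h2] with n hn
  rw [Real.norm_of_nonneg (by positivity), pow_two, pow_mul, ← mul_pow]
  exact pow_le_pow_left₀ (by positivity) hn.le n

lemma summable_chain (L : ℕ) (f : ℕ → ℕ → ℕ → ℝ) {r M : ℝ} (hr0 : 0 ≤ r) (hr : r < 1)
    (h0 : ∀ n m, m ≤ n → 0 ≤ f 0 n m ∧ f 0 n m ≤ r ^ (n ^ 2) * M)
    (hf : ∀ i, ∃ K A : ℝ, 1 ≤ K ∧ 1 ≤ A ∧
      ∀ n m, m ≤ n → 0 ≤ f (i + 1) n m ∧ f (i + 1) n m ≤ K * A ^ n) :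
    Summable (chain (L + 1) f) := by
  obtain ⟨K, A, hK, hA, h⟩ := chain_bound L (fun i => f (i + 1)) hf
  have hM : 0 ≤ M := by
    have := h0 0 0 le_rfl
    simp at this; linarith
  refine Summable.of_nonneg_of_le (f := fun n : ℕ => (r ^ (n ^ 2) * (2 * A) ^ n) * (M * K)) ?_ ?_
    ((summable_sq_exp hr0 hr (by positivity)).mul_right _)
  · intro n
    rw [chain]
    refine Finset.sum_nonneg fun m hm => ?_
    have := Finset.mem_range.mp hm
    exact mul_nonneg (h0 n m (by omega)).1 (h m).1
  · intro n
    rw [chain]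
    calc _ ≤ ∑ m ∈ Finset.range (n + 1), (r ^ (n ^ 2) * M) * (K * A ^ n) := by
            refine Finset.sum_le_sum fun m hm => ?_
            have hm := Finset.mem_range.mp hm
            have a := h0 n m (by omega)
            have b := h m
            have c : A ^ m ≤ A ^ n := pow_le_pow_right₀ hA (by omega)
            refine mul_le_mul a.2 (b.2.trans ?_) b.1 (a.1.trans a.2)
            gcongr
        _ = ((n : ℝ) + 1) * ((r ^ (n ^ 2) * M) * (K * A ^ n)) := by simp
        _ ≤ 2 ^ n * ((r ^ (n ^ 2) * M) * (K * A ^ n)) := by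
            gcongr
            exact succ_le_two_pow n
        _ = _ := by rw [mul_pow]; ring


lemma th_shift {q : ℂ} (h0 : q ≠ 0) (a b : ℕ) (r : ℤ) :
    q ^ (r ^ 2) * th (q ^ a) (q ^ b) r = th (q ^ (a + 1)) (q ^ (b + 2)) r := by
  unfold th
  have e : q ^ (r ^ 2) = q ^ (2 * ch r + r) := by rw [two_mul_ch]; congr 1; ring
  rw [e, zpow_add₀ h0, zpow_mul, pow_add q a 1, pow_add q b 2, mul_zpow, mul_zpow, pow_one]
  norm_cast
  ring

lemma th_shift_B {q : ℂ} (a b : ℕ) (r : ℤ) :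
    q ^ (r ^ 2 - r) * th (q ^ a) (q ^ b) r = th (q ^ a) (q ^ (b + 2)) r := by
  unfold th
  have e : q ^ (r ^ 2 - r) = q ^ (2 * ch r) := by rw [two_mul_ch]; congr 1; ring
  rw [e, zpow_mul, pow_add q b 2, mul_zpow]
  norm_cast
  ring

lemma norm_pow_lt {q : ℂ} (hq : ‖q‖ < 1) {a : ℕ} (ha : 0 < a) : ‖q ^ a‖ < 1 := by
  rw [norm_pow]; exact pow_lt_one₀ (norm_nonneg _) hq ha.ne'

lemma pow_div_pow {q : ℂ} (h0 : q ≠ 0) {a b : ℕ} (hab : a < b) : q ^ b / q ^ a = q ^ (b - a) := by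
  rw [div_eq_iff (pow_ne_zero _ h0), ← pow_add]; congr 1; omega

lemma summ_th_pow {q : ℂ} (h0 : q ≠ 0) (hq : ‖q‖ < 1) {a b : ℕ} (ha : 0 < a) (hab : a < b) :
    Summable fun r => ‖th (q ^ a) (q ^ b) r‖ := by
  have := summable_th (q := q ^ b) (z := q ^ a) (pow_ne_zero _ h0) (norm_pow_lt hq (by omega))
    (norm_pow_lt hq ha) (by rw [pow_div_pow h0 hab]; exact norm_pow_lt hq (by omega))
  exact this

lemma jtp_pow {q : ℂ} (h0 : q ≠ 0) (hq : ‖q‖ < 1) {a b : ℕ} (ha : 0 < a) (hab : a < b) :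
    ∑' r, th (q ^ a) (q ^ b) r =
      qPochInf (q ^ b) (q ^ b) * qPochInf (q ^ a) (q ^ b) * qPochInf (q ^ (b - a)) (q ^ b) := by
  rw [jtp (pow_ne_zero _ h0) (pow_ne_zero _ h0) (norm_pow_lt hq (by omega)) (norm_pow_lt hq ha)
    (by rw [pow_div_pow h0 hab]; exact norm_pow_lt hq (by omega)), pow_div_pow h0 hab]

lemma swap_sum (w : ℕ → ℂ) (α : ℤ → ℂ) (K : ℕ → ℤ → ℂ) (C : ℝ)
    (hw : Summable fun n => ‖w n‖) (hα : Summable fun r => ‖α r‖) (hK : ∀ n r, ‖K n r‖ ≤ C) :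
    ∑' n, w n * ∑' r, α r * K n r = ∑' r, α r * ∑' n, w n * K n r := by
  simp only [← tsum_mul_left]
  have hs : Summable (fun p : ℕ × ℤ => w p.1 * (α p.2 * K p.1 p.2)) := by
    refine Summable.of_norm_bounded (g := fun p : ℕ × ℤ => (‖w p.1‖ * ‖α p.2‖) * C)
      ((hw.mul_of_nonneg hα (fun _ => norm_nonneg _) (fun _ => norm_nonneg _)).mul_right C) ?_
    rintro ⟨n, r⟩
    rw [norm_mul, norm_mul, ← mul_assoc]
    exact mul_le_mul_of_nonneg_left (hK n r) (by positivity)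
  rw [← Summable.tsum_comm (f := fun n r => w n * (α r * K n r)) hs]
  refine tsum_congr fun r => tsum_congr fun n => ?_
  ring

lemma total_A {q : ℂ} (hq : ‖q‖ < 1) (α : ℤ → ℂ) (hα : Summable fun r => ‖α r‖) :
    ∑' n : ℕ, q ^ (n ^ 2) * bt q α n = (∑' r, q ^ (r ^ 2) * α r) * (qPochInf q q)⁻¹ := by
  obtain ⟨M, hM, hM2⟩ := iq_bdd hq
  unfold bt
  rw [swap_sum _ _ _ (M * M) (by simpa only [norm_pow] using summable_norm_sq hq) hα, ← tsum_mul_right]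
  · refine tsum_congr fun r => ?_
    rw [tsum_A hq]; ring
  · intro n r
    rw [norm_mul]
    exact mul_le_mul (hM2 _) (hM2 _) (norm_nonneg _) (by linarith)

lemma total_B {q : ℂ} (h0 : q ≠ 0) (hq : ‖q‖ < 1) (α : ℤ → ℂ) (hα : Summable fun r => ‖α r‖)
    (ha : ∀ r, α (1 - r) * q ^ r = -(α r * q ^ (1 - r))) :
    ∑' n : ℕ, q ^ (n ^ 2 + n) * bt q α n =
      (∑' r, q ^ (r ^ 2 - r) * α r) * (qPochInf q q)⁻¹ := by
  obtain ⟨M, hM, hM2⟩ := iq_bdd hq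
  simp only [bt_anti h0 hq α _ ha]
  rw [swap_sum _ _ _ (M * M) _ hα, ← tsum_mul_right]
  · refine tsum_congr fun r => ?_
    rw [mul_right_comm, mul_comm (_ * _) (α r), ← tsum_B hq r]
    congr 1
    refine tsum_congr fun n => ?_
    rw [mul_comm (iq q (n + r))]
  · intro n r
    rw [norm_mul]
    exact mul_le_mul (hM2 _) (hM2 _) (norm_nonneg _) (by linarith)
  · refine Summable.of_nonneg_of_le (fun _ => norm_nonneg _) (fun n => ?_) (summable_norm_sq hq)
    rw [norm_pow]
    exact pow_le_pow_of_le_one (norm_nonneg _) hq.le (by omega)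

/-- Full system of weights. -/
noncomputable def wt (q : ℂ) (c : ℕ) (h : ℕ → ℕ → ℕ → ℂ) : ℕ → ℕ → ℕ → ℂ
  | 0 => fun n m => q ^ (n ^ 2 + c * n) * (q ^ (m ^ 2) / qPoch q q (n - m))
  | i + 1 => h i

lemma main_sum (k : ℕ) {q : ℂ} (hq : ‖q‖ < 1) (c : ℕ) (h : ℕ → ℕ → ℕ → ℂ)
    (hb : ∀ i, ∃ K A : ℝ, 1 ≤ K ∧ 1 ≤ A ∧ ∀ n m, m ≤ n → ‖h i n m‖ ≤ K * A ^ n) :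
    ∑' s : {s : Fin (k + 1) → ℕ // Antitone s}, tphi k (wt q c h) s.1 =
      ∑' n : ℕ, q ^ (n ^ 2 + c * n) *
        ∑ m ∈ Finset.range (n + 1), (q ^ (m ^ 2) / qPoch q q (n - m)) * chain k h m := by
  rw [tsum_chain]
  · refine tsum_congr fun n => ?_
    rw [chain, Finset.mul_sum]
    refine Finset.sum_congr rfl fun m _ => ?_
    simp only [wt]
    ring
  · obtain ⟨M, hM, hM2⟩ := qPoch_inv_bdd hq hq
    refine summable_chain k (fun i n m => ‖wt q c h i n m‖) (r := ‖q‖) (M := M)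
      (norm_nonneg _) hq ?_ ?_
    · intro n m _
      refine ⟨norm_nonneg _, ?_⟩
      simp only [wt, norm_mul, div_eq_mul_inv]
      have a1 : ‖q ^ (n ^ 2 + c * n)‖ ≤ ‖q‖ ^ (n ^ 2) := by
        rw [norm_pow]; exact pow_le_pow_of_le_one (norm_nonneg _) hq.le (by omega)
      have a2 : ‖q ^ (m ^ 2)‖ * ‖(qPoch q q (n - m))⁻¹‖ ≤ 1 * M :=
        mul_le_mul (norm_qpow_le hq _) (hM2 _) (norm_nonneg _) zero_le_one
      rw [one_mul] at a2
      exact mul_le_mul a1 a2 (by positivity) (by positivity)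
    · intro i
      obtain ⟨K, A, hK, hA, hh⟩ := hb i
      exact ⟨K, A, hK, hA, fun n m hm => ⟨norm_nonneg _, hh n m hm⟩⟩

lemma bstep_bound {q : ℂ} (hq : ‖q‖ < 1) :
    ∃ K : ℝ, 1 ≤ K ∧ ∀ n m, ‖bstep q n m‖ ≤ K := by
  obtain ⟨M, hM, hM2⟩ := qPoch_bdd (-q) hq
  obtain ⟨N, hN, hN2⟩ := qPoch_inv_bdd (sq_lt hq) (sq_lt hq)
  refine ⟨M * N, by nlinarith, fun n m => ?_⟩
  rw [bstep, norm_mul, div_eq_mul_inv, norm_mul]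
  calc _ ≤ 1 * (M * N) := by
        refine mul_le_mul (norm_qpow_le hq _) ?_ (by positivity) zero_le_one
        exact mul_le_mul (hM2 _) (hN2 _) (norm_nonneg _) (by linarith)
    _ = _ := one_mul _

lemma bstep_bd {q : ℂ} (hq : ‖q‖ < 1) (i : ℕ) :
    ∃ K A : ℝ, 1 ≤ K ∧ 1 ≤ A ∧ ∀ n m, m ≤ n → ‖bstep (q ^ 2 ^ i) n m‖ ≤ K * A ^ n := by
  obtain ⟨K, hK, h⟩ := bstep_bound (norm_pow_lt hq (pow_pos two_pos i))
  exact ⟨K, 1, hK, le_rfl, fun n m _ => by simpa using h n m⟩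

lemma mstep_bd {q : ℂ} (h0 : q ≠ 0) (hq : ‖q‖ < 1) (j i : ℕ) :
    ∃ K A : ℝ, 1 ≤ K ∧ 1 ≤ A ∧ ∀ n m, m ≤ n → ‖mstep q j i n m‖ ≤ K * A ^ n := by
  obtain ⟨K, hK, h⟩ := bstep_bound (norm_pow_lt hq (pow_pos two_pos i))
  have hA : 1 ≤ ‖q ^ 2 ^ i‖⁻¹ :=
    (one_le_inv₀ (norm_pos_iff.mpr (pow_ne_zero _ h0))).mpr (norm_pow_lt hq (pow_pos two_pos i)).le
  refine ⟨K, ‖q ^ 2 ^ i‖⁻¹, hK, hA, fun n m _ => ?_⟩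
  rw [mstep, norm_mul, mul_comm]
  refine mul_le_mul (h n m) ?_ (norm_nonneg _) (by linarith)
  split_ifs
  · rw [norm_inv, norm_pow, inv_pow]
  · rw [norm_one]; exact one_le_pow₀ hA

lemma exp_aux (t : ℕ → ℕ) (ht : ∀ i, t (i + 1) ≤ t i) (k : ℕ) :
    ∑ i ∈ Finset.range (k + 1), 2 ^ i * (t (i + 1) - t (i + 2)) + 2 ^ k * t (k + 2) =
      t 1 + ∑ i ∈ Finset.range k, 2 ^ i * t (i + 2) := by
  induction k with
  | zero => have := ht 1; simp only [zero_add, Finset.range_one, Finset.sum_singleton, Finset.range_zero, Finset.sum_empty, pow_zero, one_mul, Nat.reduceAdd] at this ⊢; omega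
  | succ k ih =>
    rw [Finset.sum_range_succ, Finset.sum_range_succ (fun i => 2 ^ i * t (i + 2)) k, ← add_assoc, ← ih]
    have h := ht (k + 2)
    obtain ⟨d, hd⟩ := Nat.exists_eq_add_of_le h
    rw [show k + 1 + 1 = k + 2 from rfl, show k + 1 + 2 = k + 2 + 1 from rfl, hd,
      Nat.add_sub_cancel_left]
    ring

lemma text_anti (k : ℕ) (s : Fin (k + 1) → ℕ) (hs : Antitone s) (i : ℕ) :
    text k s (i + 1) ≤ text k s i := by
  unfold text
  by_cases h : i + 1 < k + 1
  · rw [dif_pos h, dif_pos (by omega)]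
    exact hs (by simp [Fin.le_def])
  · rw [dif_neg h]; exact Nat.zero_le _

lemma exp_text (k : ℕ) (hk : 1 ≤ k) (s : Fin (k + 1) → ℕ) (hs : Antitone s) :
    ∑ i ∈ Finset.range k, 2 ^ i * (text k s (i + 1) - text k s (i + 2)) =
      text k s 1 + ∑ m ∈ Finset.Ico 2 (k + 1), 2 ^ (m - 2) * text k s m := by
  obtain ⟨k, rfl⟩ : ∃ l, k = l + 1 := ⟨k - 1, by omega⟩
  have := exp_aux (text (k + 1) s) (text_anti _ s hs) k
  have hz : text (k + 1) s (k + 2) = 0 := by simp [text]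
  rw [hz, mul_zero, add_zero] at this
  rw [this, Finset.sum_Ico_eq_sum_range]
  congr 1
  rw [show k + 1 + 1 - 2 = k by omega]
  refine Finset.sum_congr rfl fun i _ => ?_
  rw [show 2 + i - 2 = i by omega, add_comm 2 i]

lemma prod_bstep (k : ℕ) (hk : 1 ≤ k) (q : ℂ) (s : Fin (k + 1) → ℕ) (hs : Antitone s) :
    ∏ i ∈ Finset.range k, bstep (q ^ 2 ^ i) (text k s (i + 1)) (text k s (i + 2)) =
      q ^ (text k s 1 + ∑ m ∈ Finset.Ico 2 (k + 1), 2 ^ (m - 2) * text k s m) *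
      ∏ i ∈ Finset.Ico 2 (k + 2),
           qPoch (-(q ^ 2 ^ (i - 2))) (q ^ 2 ^ (i - 2)) (2 * text k s i) /
             qPoch (q ^ 2 ^ (i - 1)) (q ^ 2 ^ (i - 1)) (text k s (i - 1) - text k s i) := by
  rw [← exp_text k hk s hs, Finset.prod_Ico_eq_prod_range, Nat.add_sub_cancel,
    ← Finset.prod_pow_eq_pow_sum, ← Finset.prod_mul_distrib]
  refine Finset.prod_congr rfl fun i _ => ?_
  rw [show 2 + i - 2 = i by omega, show 2 + i - 1 = i + 1 by omega, add_comm 2 i, bstep,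
    ← pow_mul, ← pow_mul, ← pow_succ]

lemma tphi_wt (k : ℕ) (q : ℂ) (c : ℕ) (h : ℕ → ℕ → ℕ → ℂ) (s : Fin (k + 1) → ℕ) :
    tphi k (wt q c h) s = q ^ (text k s 0 ^ 2 + c * text k s 0) *
      (q ^ (text k s 1 ^ 2) / qPoch q q (text k s 0 - text k s 1)) *
      ∏ i ∈ Finset.range k, h i (text k s (i + 1)) (text k s (i + 2)) := by
  rw [tphi, Finset.prod_range_succ', mul_comm]
  rfl

lemma prod_mstep (k j : ℕ) (hj : j < k) (q : ℂ) (s : Fin (k + 1) → ℕ) :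
    ∏ i ∈ Finset.range k, mstep q j i (text k s (i + 1)) (text k s (i + 2)) =
      ((q ^ 2 ^ j) ^ text k s (j + 1))⁻¹ *
      ∏ i ∈ Finset.range k, bstep (q ^ 2 ^ i) (text k s (i + 1)) (text k s (i + 2)) := by
  simp only [mstep]
  rw [Finset.prod_mul_distrib, Finset.prod_ite_eq' (Finset.range k) j, if_pos (by simpa using hj)]

/-- Corollary 4.4.  The tuple `s` encodes `s_1 ≥ s_2 ≥ ⋯ ≥ s_{k+1} ≥ 0` via `s_m = t (m-1)`,
with the convention `s_{k+2} = 0`.  The base exponent is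
`E₀ = s_1² + s_2² + s_2 + ∑_{m=3}^{k+1} 2^{m-3} s_m` (an integer), and the three identities
correspond to the perturbations `-2^{j-1} s_{j+1}`, `0`, and `+s_1` of `E₀`. -/
theorem corollary_4_4 (q : ℂ) (h0 : 0 < ‖q‖) (h1 : ‖q‖ < 1)
    (k j : ℕ) (hk : 1 ≤ k) (hj1 : 1 ≤ j) (hjk : j ≤ k) :
    ((∑' s : {s : Fin (k + 1) → ℕ // Antitone s},
      (let t : ℕ → ℕ := fun m => if h : m < k + 1 then s.1 ⟨m, h⟩ else 0
       q ^ ((t 0 : ℤ) ^ 2 + (t 1 : ℤ) ^ 2 + (t 1 : ℤ) +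
            (∑ m ∈ Finset.Ico 2 (k + 1), (2 : ℤ) ^ (m - 2) * (t m : ℤ)) -
            (2 : ℤ) ^ (j - 1) * (t j : ℤ)) /
         qPoch q q (t 0 - t 1) *
         ∏ i ∈ Finset.Ico 2 (k + 2),
           qPoch (-(q ^ 2 ^ (i - 2))) (q ^ 2 ^ (i - 2)) (2 * t i) /
             qPoch (q ^ 2 ^ (i - 1)) (q ^ 2 ^ (i - 1)) (t (i - 1) - t i))) =
      qPochInf (q ^ (2 ^ k + 4)) (q ^ (2 ^ k + 4)) *
        qPochInf (q ^ (2 ^ (j - 1) + 2)) (q ^ (2 ^ k + 4)) *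
        qPochInf (q ^ (2 ^ k - 2 ^ (j - 1) + 2)) (q ^ (2 ^ k + 4)) / qPochInf q q) ∧
    ((∑' s : {s : Fin (k + 1) → ℕ // Antitone s},
      (let t : ℕ → ℕ := fun m => if h : m < k + 1 then s.1 ⟨m, h⟩ else 0
       q ^ ((t 0) ^ 2 + (t 1) ^ 2 + t 1 + ∑ m ∈ Finset.Ico 2 (k + 1), 2 ^ (m - 2) * t m) /
         qPoch q q (t 0 - t 1) *
         ∏ i ∈ Finset.Ico 2 (k + 2),
           qPoch (-(q ^ 2 ^ (i - 2))) (q ^ 2 ^ (i - 2)) (2 * t i) /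
             qPoch (q ^ 2 ^ (i - 1)) (q ^ 2 ^ (i - 1)) (t (i - 1) - t i))) =
      qPochInf (q ^ (2 ^ k + 4)) (q ^ (2 ^ k + 4)) * qPochInf (q ^ 2) (q ^ (2 ^ k + 4)) *
        qPochInf (q ^ (2 ^ k + 2)) (q ^ (2 ^ k + 4)) / qPochInf q q) ∧
    ((∑' s : {s : Fin (k + 1) → ℕ // Antitone s},
      (let t : ℕ → ℕ := fun m => if h : m < k + 1 then s.1 ⟨m, h⟩ else 0
       q ^ ((t 0) ^ 2 + (t 1) ^ 2 + t 1 + (∑ m ∈ Finset.Ico 2 (k + 1), 2 ^ (m - 2) * t m) +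
            t 0) /
         qPoch q q (t 0 - t 1) *
         ∏ i ∈ Finset.Ico 2 (k + 2),
           qPoch (-(q ^ 2 ^ (i - 2))) (q ^ 2 ^ (i - 2)) (2 * t i) /
             qPoch (q ^ 2 ^ (i - 1)) (q ^ 2 ^ (i - 1)) (t (i - 1) - t i))) =
      qPochInf (q ^ (2 ^ k + 4)) (q ^ (2 ^ k + 4)) * qPochInf q (q ^ (2 ^ k + 4)) *
        qPochInf (q ^ (2 ^ k + 3)) (q ^ (2 ^ k + 4)) / qPochInf q q) := by
  have hq0 : q ≠ 0 := norm_pos_iff.mp h0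
  have hpos : 0 < 2 ^ k := pow_pos two_pos k
  have hth : th 1 (q ^ 2 ^ k) = th (q ^ 0) (q ^ 2 ^ k) := by rw [pow_zero]
  refine ⟨?_, ?_, ?_⟩
  · obtain ⟨j, rfl⟩ : ∃ l, j = l + 1 := ⟨j - 1, by omega⟩
    have hlt : 2 ^ j < 2 ^ k := Nat.pow_lt_pow_right (by norm_num) (by omega)
    have hjp : 0 < 2 ^ j := pow_pos two_pos j
    rw [Nat.add_sub_cancel]
    trans ∑' s : {s : Fin (k + 1) → ℕ // Antitone s}, tphi k (wt q 0 (mstep q j)) s.1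
    · refine tsum_congr fun s => ?_
      rw [tphi_wt, prod_mstep k j (by omega), prod_bstep k hk q s.1 s.2]
      change q ^ (((text k s.1 0 : ℕ) : ℤ) ^ 2 + ((text k s.1 1 : ℕ) : ℤ) ^ 2 +
            ((text k s.1 1 : ℕ) : ℤ) +
            (∑ m ∈ Finset.Ico 2 (k + 1), (2 : ℤ) ^ (m - 2) * ((text k s.1 m : ℕ) : ℤ)) -
            (2 : ℤ) ^ j * ((text k s.1 (j + 1) : ℕ) : ℤ)) /
         qPoch q q (text k s.1 0 - text k s.1 1) *
         ∏ i ∈ Finset.Ico 2 (k + 2),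
           qPoch (-(q ^ 2 ^ (i - 2))) (q ^ 2 ^ (i - 2)) (2 * text k s.1 i) /
             qPoch (q ^ 2 ^ (i - 1)) (q ^ 2 ^ (i - 1)) (text k s.1 (i - 1) - text k s.1 i) = _
      have e : q ^ (((text k s.1 0 : ℕ) : ℤ) ^ 2 + ((text k s.1 1 : ℕ) : ℤ) ^ 2 +
            ((text k s.1 1 : ℕ) : ℤ) +
            (∑ m ∈ Finset.Ico 2 (k + 1), (2 : ℤ) ^ (m - 2) * ((text k s.1 m : ℕ) : ℤ)) -
            (2 : ℤ) ^ j * ((text k s.1 (j + 1) : ℕ) : ℤ)) =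
          q ^ (text k s.1 0 ^ 2) * q ^ (text k s.1 1 ^ 2) *
          q ^ (text k s.1 1 + ∑ m ∈ Finset.Ico 2 (k + 1), 2 ^ (m - 2) * text k s.1 m) *
          ((q ^ 2 ^ j) ^ text k s.1 (j + 1))⁻¹ := by
        rw [zpow_sub₀ hq0, div_eq_mul_inv, ← pow_mul, ← pow_add, ← pow_add, ← zpow_natCast q,
          ← zpow_natCast q]
        push_cast
        congr 2
        ring
      rw [e]
      ring
    · rw [main_sum k h1 0 _ (mstep_bd hq0 h1 j)]
      simp only [chain_mod k j (by omega) q hq0 h1, bt_B h1, zero_mul, add_zero, th_shift hq0]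
      rw [total_A h1 _ (summ_th_pow hq0 h1 (by omega) (by omega))]
      simp only [th_shift hq0]
      rw [jtp_pow hq0 h1 (by omega) (by omega), div_eq_mul_inv,
        show 2 ^ k + 2 + 2 - (2 ^ j + 1 + 1) = 2 ^ k - 2 ^ j + 2 by omega]
  · trans ∑' s : {s : Fin (k + 1) → ℕ // Antitone s},
      tphi k (wt q 0 (fun i => bstep (q ^ 2 ^ i))) s.1
    · refine tsum_congr fun s => ?_
      rw [tphi_wt, prod_bstep k hk q s.1 s.2]
      change q ^ (text k s.1 0 ^ 2 + text k s.1 1 ^ 2 + text k s.1 1 +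
            (∑ m ∈ Finset.Ico 2 (k + 1), 2 ^ (m - 2) * text k s.1 m)) /
         qPoch q q (text k s.1 0 - text k s.1 1) *
         ∏ i ∈ Finset.Ico 2 (k + 2),
           qPoch (-(q ^ 2 ^ (i - 2))) (q ^ 2 ^ (i - 2)) (2 * text k s.1 i) /
             qPoch (q ^ 2 ^ (i - 1)) (q ^ 2 ^ (i - 1)) (text k s.1 (i - 1) - text k s.1 i) = _
      simp only [pow_add]
      ring
    · rw [main_sum k h1 0 _ (bstep_bd h1)]
      simp only [chain_unmod k q hq0 h1, bt_B h1, zero_mul, add_zero, hth, th_shift hq0]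
      rw [total_A h1 _ (summ_th_pow hq0 h1 (by omega) (by omega))]
      simp only [th_shift hq0]
      rw [jtp_pow hq0 h1 (by omega) (by omega), div_eq_mul_inv,
        show 2 ^ k + 2 + 2 - (0 + 1 + 1) = 2 ^ k + 2 by omega]
  · trans ∑' s : {s : Fin (k + 1) → ℕ // Antitone s},
      tphi k (wt q 1 (fun i => bstep (q ^ 2 ^ i))) s.1
    · refine tsum_congr fun s => ?_
      rw [tphi_wt, prod_bstep k hk q s.1 s.2]
      change q ^ (text k s.1 0 ^ 2 + text k s.1 1 ^ 2 + text k s.1 1 +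
            (∑ m ∈ Finset.Ico 2 (k + 1), 2 ^ (m - 2) * text k s.1 m) + text k s.1 0) /
         qPoch q q (text k s.1 0 - text k s.1 1) *
         ∏ i ∈ Finset.Ico 2 (k + 2),
           qPoch (-(q ^ 2 ^ (i - 2))) (q ^ 2 ^ (i - 2)) (2 * text k s.1 i) /
             qPoch (q ^ 2 ^ (i - 1)) (q ^ 2 ^ (i - 1)) (text k s.1 (i - 1) - text k s.1 i) = _
      simp only [pow_add, one_mul]
      ring
    · rw [main_sum k h1 1 _ (bstep_bd h1)]
      simp only [chain_unmod k q hq0 h1, bt_B h1, one_mul, hth, th_shift hq0]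
      rw [total_B hq0 h1 _ (summ_th_pow hq0 h1 (by omega) (by omega))]
      · simp only [th_shift_B]
        rw [jtp_pow hq0 h1 (by omega) (by omega), div_eq_mul_inv,
          show 2 ^ k + 2 + 2 - (0 + 1) = 2 ^ k + 3 by omega, zero_add, pow_one]
      · intro r
        unfold th
        have hr : (-1 : ℂ) ^ (1 - r) = - (-1) ^ r := by
          rw [zpow_sub₀ (by norm_num), zpow_one, div_eq_mul_inv, ← inv_zpow]
          norm_num
        rw [ch_reflect, hr, zero_add, pow_one]
        ring
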